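/- arXiv:2112.03120 — 2 statements merged into one kernel-verified Lean document; each statement's English description precedes it below -/
import Mathlib

section
/- There is an absolute constant K > 0 such that for every finite weighted graph G = (V, E, w) on n ≥ 2 vertices with positive integer edge weights and every ε ∈ (0,1), there exists a reweighted subgraph H of G with at most K · n · (log n)/ε² edges which is a (1±ε)-cut sparsifier of G. -/
open scoped Classical

/-- The edge `e` crosses the vertex set `A`, i.e. it has one endpoint in `A`
and the other outside `A`. -/
def Crosses {V : Type} (A : Set V) (e : Sym2 V) : Prop :=
  ∃ u v, e = s(u, v) ∧ u ∈ A ∧ v ∉ A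

/-- The weight of the cut induced by the partition `{A, Aᶜ}` in the edge set `E`
with weight function `w`. -/
noncomputable def cutWeight {V : Type} (E : Finset (Sym2 V)) (w : Sym2 V → ℝ) (A : Set V) : ℝ :=
  ∑ e ∈ E, if Crosses A e then w e else 0


open Matrix

section RankOneUpdates

variable {ι : Type*}

theorem isHermitian_smul_vecMulVec_self (t : ℝ) (v : ι → ℝ) :
    (t • vecMulVec v v).IsHermitian := by
  ext i j
  simp [vecMulVec_apply, mul_comm]

variable [Fintype ι]

theorem dotProduct_vecMulVec_self_mulVec (v x : ι → ℝ) :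
    x ⬝ᵥ vecMulVec v v *ᵥ x = (v ⬝ᵥ x) ^ 2 := by
  rw [vecMulVec_mulVec, dotProduct_comm v x]
  simp [sq]

theorem Matrix.IsHermitian.dotProduct_mulVec_comm {P : Matrix ι ι ℝ} (hP : P.IsHermitian)
    (x y : ι → ℝ) : x ⬝ᵥ P *ᵥ y = y ⬝ᵥ P *ᵥ x := by
  have hT : Pᵀ = P := by simpa [conjTranspose_eq_transpose_of_trivial] using hP.eq
  rw [dotProduct_mulVec, dotProduct_comm, ← mulVec_transpose, hT]

/-- Adding a nonnegative rank-one matrix preserves positive definiteness. -/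
theorem Matrix.PosDef.add_smul_vecMulVec {P : Matrix ι ι ℝ} (hP : P.PosDef) {t : ℝ} (ht : 0 ≤ t)
    (v : ι → ℝ) : (P + t • vecMulVec v v).PosDef := by
  refine hP.add_posSemidef ?_
  simpa using (posSemidef_vecMulVec_self_star v).smul ht

variable [DecidableEq ι]

/-- Subtracting a small rank-one matrix preserves positive definiteness. -/
theorem Matrix.PosDef.sub_smul_vecMulVec {P : Matrix ι ι ℝ} (hP : P.PosDef) {t : ℝ} (ht : 0 < t)
    {v : ι → ℝ} (hv : t * (v ⬝ᵥ P⁻¹ *ᵥ v) < 1) : (P - t • vecMulVec v v).PosDef := by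
  refine .of_dotProduct_mulVec_pos (hP.1.sub (isHermitian_smul_vecMulVec_self t v)) fun x hx => ?_
  have hdet : IsUnit P.det := (isUnit_iff_isUnit_det P).1 hP.isUnit
  have hPz : P *ᵥ (P⁻¹ *ᵥ v) = v := by
    rw [mulVec_mulVec, mul_nonsing_inv _ hdet, one_mulVec]
  set z := P⁻¹ *ᵥ v
  have hxP : 0 < x ⬝ᵥ P *ᵥ x := by simpa using hP.dotProduct_mulVec_pos hx
  have key : 0 ≤ x ⬝ᵥ P *ᵥ x - 2 * (t * (v ⬝ᵥ x)) * (v ⬝ᵥ x)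
      + (t * (v ⬝ᵥ x)) ^ 2 * (v ⬝ᵥ z) := by
    have h := hP.posSemidef.dotProduct_mulVec_nonneg (x - (t * (v ⬝ᵥ x)) • z)
    simp only [star_trivial, mulVec_sub, mulVec_smul, hPz, dotProduct_sub, sub_dotProduct,
      smul_dotProduct, dotProduct_smul, smul_eq_mul] at h
    rw [hP.1.dotProduct_mulVec_comm z x, hPz, dotProduct_comm z v, dotProduct_comm x v] at h
    linarith
  have hgoal : 0 < x ⬝ᵥ P *ᵥ x - t * (v ⬝ᵥ x) ^ 2 := by
    by_cases h0 : v ⬝ᵥ x = 0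
    · simpa [h0] using hxP
    · have h1 : 0 < t * (v ⬝ᵥ x) ^ 2 * (1 - t * (v ⬝ᵥ z)) :=
        mul_pos (by positivity) (by linarith)
      nlinarith
  simpa [sub_mulVec, smul_mulVec, dotProduct_sub, dotProduct_smul,
    dotProduct_vecMulVec_self_mulVec] using hgoal

/-- The trace of the Sherman–Morrison formula. -/
theorem Matrix.PosDef.trace_inv_add_smul_vecMulVec {P : Matrix ι ι ℝ} (hP : P.PosDef) {t : ℝ}
    {v : ι → ℝ} (hv : 1 + t * (v ⬝ᵥ P⁻¹ *ᵥ v) ≠ 0) :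
    (P + t • vecMulVec v v)⁻¹.trace =
      P⁻¹.trace - t * (v ⬝ᵥ (P⁻¹ * P⁻¹) *ᵥ v) / (1 + t * (v ⬝ᵥ P⁻¹ *ᵥ v)) := by
  have hdet : IsUnit P.det := (isUnit_iff_isUnit_det P).1 hP.isUnit
  have hT : P⁻¹ᵀ = P⁻¹ := by
    simpa [conjTranspose_eq_transpose_of_trivial] using hP.inv.1.eq
  have hvM : v ᵥ* P⁻¹ = P⁻¹ *ᵥ v := by rw [← mulVec_transpose, hT]
  have hinv : (P + t • vecMulVec v v)⁻¹ =
      P⁻¹ - (t / (1 + t * (v ⬝ᵥ P⁻¹ *ᵥ v))) • vecMulVec (P⁻¹ *ᵥ v) (P⁻¹ *ᵥ v) := by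
    apply inv_eq_right_inv
    rw [add_mul, mul_sub, mul_sub, mul_nonsing_inv _ hdet, smul_mul_assoc, vecMulVec_mul, hvM,
      mul_smul_comm, mul_vecMulVec, mulVec_mulVec, mul_nonsing_inv _ hdet, one_mulVec,
      smul_mul_assoc, mul_smul_comm, vecMulVec_mul_vecMulVec]
    have hs : t - t / (1 + t * (v ⬝ᵥ P⁻¹ *ᵥ v))
        - t * (t / (1 + t * (v ⬝ᵥ P⁻¹ *ᵥ v)) * (v ⬝ᵥ P⁻¹ *ᵥ v)) = 0 := by
      field_simp
      ring
    ext i j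
    simp only [add_apply, sub_apply, smul_apply, vecMulVec_apply, smul_eq_mul, Pi.smul_apply]
    linear_combination (v i * (P⁻¹ *ᵥ v) j) * hs
  rw [hinv, trace_sub, trace_smul, trace_vecMulVec, ← mulVec_mulVec,
    dotProduct_mulVec v P⁻¹ (P⁻¹ *ᵥ v), hvM, smul_eq_mul]
  ring

/-- Traces of resolvents of a positive definite matrix, expressed through eigenvalues. -/
theorem Matrix.PosDef.exists_eigenvalues_trace_inv {P : Matrix ι ι ℝ} (hP : P.PosDef) :
    ∃ c : ι → ℝ, (∀ i, 0 < c i) ∧ ∀ δ : ℝ, (∀ i, 0 < c i + δ) →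
      (P + δ • 1).PosDef ∧ (P + δ • 1)⁻¹.trace = ∑ i, 1 / (c i + δ) ∧
        ((P + δ • 1)⁻¹ * (P + δ • 1)⁻¹).trace = ∑ i, 1 / (c i + δ) ^ 2 := by
  refine ⟨hP.1.eigenvalues, hP.eigenvalues_pos, fun δ hδ => ?_⟩
  set c := hP.1.eigenvalues
  set Q : Matrix ι ι ℝ := hP.1.eigenvectorUnitary.1
  have hQ : Q * star Q = 1 := Unitary.coe_mul_star_self _
  have hQ' : star Q * Q = 1 := Unitary.coe_star_mul_self _
  have hspec : P = Q * diagonal c * star Q := hP.1.spectral_theorem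
  have hsum : P + δ • 1 = Q * diagonal (fun i => c i + δ) * star Q := by
    have : diagonal (fun i => c i + δ) = diagonal c + δ • (1 : Matrix ι ι ℝ) := by
      ext i j
      by_cases h : i = j <;> simp [h]
    rw [this, mul_add, add_mul, ← hspec, mul_smul_comm, mul_one, smul_mul_assoc, hQ]
  have hinv : (P + δ • 1)⁻¹ = Q * diagonal (fun i => 1 / (c i + δ)) * star Q := by
    apply inv_eq_right_inv
    have hd : diagonal (fun i => c i + δ) * diagonal (fun i => 1 / (c i + δ)) = 1 := by
      rw [diagonal_mul_diagonal, ← diagonal_one]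
      congr 1
      ext i
      exact mul_one_div_cancel (hδ i).ne'
    calc (P + δ • 1) * (Q * diagonal (fun i => 1 / (c i + δ)) * star Q)
        = Q * diagonal (fun i => c i + δ) * (star Q * Q) *
            diagonal (fun i => 1 / (c i + δ)) * star Q := by rw [hsum]; simp only [mul_assoc]
      _ = Q * (diagonal (fun i => c i + δ) * diagonal (fun i => 1 / (c i + δ))) * star Q := by
          rw [hQ', mul_one]; simp only [mul_assoc]
      _ = 1 := by rw [hd, mul_one, hQ]
  have htr : ∀ d : ι → ℝ, (Q * diagonal d * star Q).trace = ∑ i, d i := fun d => by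
    rw [trace_mul_cycle, hQ', one_mul, trace_diagonal]
  refine ⟨?_, ?_, ?_⟩
  · rw [hsum]
    have hu : IsUnit Q := IsUnit.of_mul_eq_one _ hQ
    exact (IsUnit.posDef_star_right_conjugate_iff hu).2 (posDef_diagonal_iff.2 hδ)
  · rw [hinv, htr]
  · have : (P + δ • 1)⁻¹ * (P + δ • 1)⁻¹ =
        Q * diagonal (fun i => 1 / (c i + δ) ^ 2) * star Q := by
      calc (P + δ • 1)⁻¹ * (P + δ • 1)⁻¹
          = Q * diagonal (fun i => 1 / (c i + δ)) * (star Q * Q) *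
            diagonal (fun i => 1 / (c i + δ)) * star Q := by rw [hinv]; simp only [mul_assoc]
        _ = Q * (diagonal (fun i => 1 / (c i + δ)) * diagonal (fun i => 1 / (c i + δ)))
            * star Q := by rw [hQ', mul_one]; simp only [mul_assoc]
        _ = _ := by
          rw [diagonal_mul_diagonal]
          congr 3
          ext i
          rw [div_mul_div_comm, one_mul, sq]
    rw [this, htr]

/-- The quadratic form of a matrix averages to its trace over a decomposition of the identity. -/
theorem sum_dotProduct_mulVec_eq_trace {α : Type*} {E : Finset α} {v : α → ι → ℝ}
    (hv : ∑ e ∈ E, vecMulVec (v e) (v e) = 1) (M : Matrix ι ι ℝ) :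
    ∑ e ∈ E, v e ⬝ᵥ M *ᵥ v e = M.trace := by
  calc ∑ e ∈ E, v e ⬝ᵥ M *ᵥ v e = ∑ e ∈ E, (M * vecMulVec (v e) (v e)).trace := by
        refine Finset.sum_congr rfl fun e _ => ?_
        rw [mul_vecMulVec, trace_vecMulVec, dotProduct_comm]
    _ = M.trace := by rw [← trace_sum, ← Finset.mul_sum, hv, mul_one]

end RankOneUpdates

section BarrierArgument

variable {ι : Type*} [Fintype ι] [DecidableEq ι]

/-- Moving the upper barrier away by `δ`: averaged cost of a rank-one update. -/
theorem Matrix.PosDef.upper_barrier_shift [Nonempty ι] {P : Matrix ι ι ℝ} (hP : P.PosDef) {δ : ℝ}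
    (hδ : 0 < δ) :
    (P + δ • 1).PosDef ∧ 0 < P⁻¹.trace - (P + δ • 1)⁻¹.trace ∧
      ((P + δ • 1)⁻¹ * (P + δ • 1)⁻¹).trace / (P⁻¹.trace - (P + δ • 1)⁻¹.trace)
        + (P + δ • 1)⁻¹.trace ≤ 1 / δ + P⁻¹.trace := by
  obtain ⟨c, hc, h⟩ := hP.exists_eigenvalues_trace_inv
  obtain ⟨-, h0, -⟩ := h 0 (by simpa using hc)
  have hcδ : ∀ i, 0 < c i + δ := fun i => by linarith [hc i]
  obtain ⟨hpos, h1, h2⟩ := h δ hcδ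
  simp only [zero_smul, add_zero] at h0
  have hdiff : P⁻¹.trace - (P + δ • 1)⁻¹.trace = ∑ i, δ / (c i * (c i + δ)) := by
    rw [h0, h1, ← Finset.sum_sub_distrib]
    refine Finset.sum_congr rfl fun i _ => ?_
    have := hc i
    have := hcδ i
    field_simp
    ring
  have hdpos : 0 < P⁻¹.trace - (P + δ • 1)⁻¹.trace := by
    rw [hdiff]
    exact Finset.sum_pos (fun i _ => div_pos hδ (mul_pos (hc i) (hcδ i))) Finset.univ_nonempty
  refine ⟨hpos, hdpos, ?_⟩
  have hquot : ((P + δ • 1)⁻¹ * (P + δ • 1)⁻¹).trace / (P⁻¹.trace - (P + δ • 1)⁻¹.trace)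
      ≤ 1 / δ := by
    rw [div_le_iff₀ hdpos, hdiff, h2, Finset.mul_sum]
    refine Finset.sum_le_sum fun i _ => ?_
    have h3 := hc i
    have h4 := hcδ i
    rw [one_div_mul_eq_div, div_div, mul_comm _ δ, ← div_div, div_self hδ.ne']
    refine one_div_le_one_div_of_le (mul_pos h3 h4) ?_
    nlinarith
  linarith

/-- Moving the lower barrier up by `1`: averaged gain of a rank-one update. -/
theorem Matrix.PosDef.lower_barrier_shift [Nonempty ι] {P : Matrix ι ι ℝ} (hP : P.PosDef)
    (htr : P⁻¹.trace < 1) :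
    (P + (-1 : ℝ) • 1).PosDef ∧ 0 < (P + (-1 : ℝ) • 1)⁻¹.trace - P⁻¹.trace ∧
      1 - P⁻¹.trace ≤ ((P + (-1 : ℝ) • 1)⁻¹ * (P + (-1 : ℝ) • 1)⁻¹).trace /
        ((P + (-1 : ℝ) • 1)⁻¹.trace - P⁻¹.trace) - (P + (-1 : ℝ) • 1)⁻¹.trace := by
  obtain ⟨c, hc, h⟩ := hP.exists_eigenvalues_trace_inv
  obtain ⟨-, h0, -⟩ := h 0 (by simpa using hc)
  simp only [zero_smul, add_zero] at h0
  have hcδ : ∀ i, 0 < c i + -1 := fun i => by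
    have h1 : 1 / c i ≤ ∑ j, 1 / c j :=
      Finset.single_le_sum (f := fun j => 1 / c j) (fun j _ => (one_div_pos.2 (hc j)).le)
        (Finset.mem_univ i)
    have h2 : 1 / c i < 1 := by linarith
    rw [div_lt_one (hc i)] at h2
    linarith
  obtain ⟨hpos, h1, h2⟩ := h (-1) hcδ
  have hdiff : (P + (-1 : ℝ) • 1)⁻¹.trace - P⁻¹.trace = ∑ i, 1 / (c i * (c i + -1)) := by
    rw [h0, h1, ← Finset.sum_sub_distrib]
    refine Finset.sum_congr rfl fun i _ => ?_
    have := (hc i).ne'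
    have := (hcδ i).ne'
    field_simp
    ring
  have hdpos : 0 < (P + (-1 : ℝ) • 1)⁻¹.trace - P⁻¹.trace := by
    rw [hdiff]
    exact Finset.sum_pos (fun i _ => div_pos one_pos (mul_pos (hc i) (hcδ i)))
      Finset.univ_nonempty
  refine ⟨hpos, hdpos, ?_⟩
  set D := (P + (-1 : ℝ) • 1)⁻¹.trace - P⁻¹.trace with hD
  have hsq : ((P + (-1 : ℝ) • 1)⁻¹ * (P + (-1 : ℝ) • 1)⁻¹).trace =
      D + ∑ i, 1 / (c i * (c i + -1) ^ 2) := by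
    rw [h2, hdiff, ← Finset.sum_add_distrib]
    refine Finset.sum_congr rfl fun i _ => ?_
    have := (hc i).ne'
    have := (hcδ i).ne'
    field_simp
    ring
  have hT : 0 ≤ ∑ i, 1 / (c i * (c i + -1) ^ 2) :=
    Finset.sum_nonneg fun i _ => by have := hc i; positivity
  have hCS : D ^ 2 ≤ P⁻¹.trace * ∑ i, 1 / (c i * (c i + -1) ^ 2) := by
    rw [hdiff, h0]
    refine Finset.sum_sq_le_sum_mul_sum_of_sq_le_mul _ (fun i _ => (one_div_pos.2 (hc i)).le)
      (fun i _ => by have := hc i; positivity) fun i _ => ?_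
    have := (hc i).ne'
    have := (hcδ i).ne'
    refine le_of_eq ?_
    field_simp
  have hquot : 1 + D ≤ ((P + (-1 : ℝ) • 1)⁻¹ * (P + (-1 : ℝ) • 1)⁻¹).trace / D := by
    rw [le_div_iff₀ hdpos, hsq]
    nlinarith
  linarith

/-- One step of the Batson–Spielman–Srivastava barrier argument. -/
theorem exists_rankOne_update [Nonempty ι] {α : Type*} {E : Finset α} {v : α → ι → ℝ}
    (hv : ∑ e ∈ E, vecMulVec (v e) (v e) = 1) {η : ℝ} (hη : 0 < η) (hη' : η < 1 / 4)
    {U L : Matrix ι ι ℝ} (hU : U.PosDef) (hUη : U⁻¹.trace ≤ η)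
    (hL : L.PosDef) (hLη : L⁻¹.trace ≤ η) :
    ∃ e ∈ E, ∃ t : ℝ, 0 < t ∧
      (U + (1 + 4 * η) • 1 - t • vecMulVec (v e) (v e)).PosDef ∧
      (U + (1 + 4 * η) • 1 - t • vecMulVec (v e) (v e))⁻¹.trace ≤ η ∧
      (L + (-1 : ℝ) • 1 + t • vecMulVec (v e) (v e)).PosDef ∧
      (L + (-1 : ℝ) • 1 + t • vecMulVec (v e) (v e))⁻¹.trace ≤ η := by
  obtain ⟨hU', hΔU, hUavg⟩ := hU.upper_barrier_shift (δ := 1 + 4 * η) (by linarith)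
  obtain ⟨hL', hΔL, hLavg⟩ := hL.lower_barrier_shift (by linarith)
  set U' := U + (1 + 4 * η) • (1 : Matrix ι ι ℝ)
  set L' := L + (-1 : ℝ) • (1 : Matrix ι ι ℝ)
  set ΔU := U⁻¹.trace - U'⁻¹.trace with hΔU_def
  set ΔL := L'⁻¹.trace - L⁻¹.trace with hΔL_def
  have hsum : ∑ e ∈ E, ((v e ⬝ᵥ (U'⁻¹ * U'⁻¹) *ᵥ v e) / ΔU + v e ⬝ᵥ U'⁻¹ *ᵥ v e)
      < ∑ e ∈ E, ((v e ⬝ᵥ (L'⁻¹ * L'⁻¹) *ᵥ v e) / ΔL - v e ⬝ᵥ L'⁻¹ *ᵥ v e) := by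
    rw [Finset.sum_add_distrib, Finset.sum_sub_distrib, ← Finset.sum_div, ← Finset.sum_div]
    simp only [sum_dotProduct_mulVec_eq_trace hv]
    have hconst : 1 / (1 + 4 * η) < 1 - 2 * η := by
      rw [div_lt_iff₀ (by linarith)]
      nlinarith
    linarith
  obtain ⟨e, heE, he⟩ := Finset.exists_lt_of_sum_lt hsum
  have hnonneg : ∀ {M : Matrix ι ι ℝ}, M.PosDef → 0 ≤ v e ⬝ᵥ M *ᵥ v e := fun hM => by
    simpa using hM.posSemidef.dotProduct_mulVec_nonneg (v e)
  have hsqnonneg : ∀ {M : Matrix ι ι ℝ}, M.PosDef → 0 ≤ v e ⬝ᵥ (M * M) *ᵥ v e := fun hM => by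
    have := hM.posSemidef.pow 2
    rw [sq] at this
    simpa using this.dotProduct_mulVec_nonneg (v e)
  have hpU := hnonneg hU'.inv
  have hpL := hnonneg hL'.inv
  have hqU := hsqnonneg hU'.inv
  set pU := v e ⬝ᵥ U'⁻¹ *ᵥ v e
  set pL := v e ⬝ᵥ L'⁻¹ *ᵥ v e
  set qU := v e ⬝ᵥ (U'⁻¹ * U'⁻¹) *ᵥ v e
  set qL := v e ⬝ᵥ (L'⁻¹ * L'⁻¹) *ᵥ v e
  have hqUΔ : 0 ≤ qU / ΔU := div_nonneg hqU hΔU.le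
  have hr : 0 < qL / ΔL - pL := by linarith
  obtain ⟨t, ht, htr⟩ : ∃ t : ℝ, 0 < t ∧ t * (qL / ΔL - pL) = 1 :=
    ⟨_, inv_pos.2 hr, inv_mul_cancel₀ hr.ne'⟩
  have htU : t * (qU / ΔU) + t * pU < 1 := by
    rw [← htr, ← mul_add]
    exact mul_lt_mul_of_pos_left he ht
  have htpU : t * pU < 1 := by nlinarith
  have htpL : 0 < 1 + t * pL := by positivity
  refine ⟨e, heE, t, ht, hU'.sub_smul_vecMulVec ht htpU, ?_, hL'.add_smul_vecMulVec ht.le _, ?_⟩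
  · have hne : 1 + -t * pU ≠ 0 := by linarith
    have h := hU'.trace_inv_add_smul_vecMulVec (t := -t) (v := v e) hne
    rw [neg_smul, ← sub_eq_add_neg] at h
    rw [h]
    have h1 : t * qU / (1 - t * pU) ≤ ΔU := by
      rw [div_le_iff₀ (by linarith)]
      have : t * qU = t * (qU / ΔU) * ΔU := by field_simp
      rw [this, mul_comm ΔU]
      exact mul_le_mul_of_nonneg_right (by linarith) hΔU.le
    have h2 : U'⁻¹.trace - -t * qU / (1 + -t * pU) = U'⁻¹.trace + t * qU / (1 - t * pU) := by
      rw [neg_mul, neg_mul, neg_div, sub_neg_eq_add, ← sub_eq_add_neg]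
    linarith
  · rw [hL'.trace_inv_add_smul_vecMulVec htpL.ne']
    have h1 : t * qL / (1 + t * pL) = ΔL := by
      rw [div_eq_iff htpL.ne']
      have : t * qL = t * (qL / ΔL) * ΔL := by field_simp
      rw [this]
      linear_combination ΔL * htr
    linarith

/-- The barrier argument after `N` steps. -/
theorem exists_barrier_iterate [Nonempty ι] {α : Type*} {E : Finset α} {v : α → ι → ℝ}
    (hv : ∑ e ∈ E, vecMulVec (v e) (v e) = 1) {η : ℝ} (hη : 0 < η) (hη' : η < 1 / 4) (N : ℕ) :
    ∃ (S : Finset α) (s : α → ℝ), S ⊆ E ∧ S.card ≤ N ∧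
      (((Fintype.card ι : ℝ) / η + N * (1 + 4 * η)) • 1
        - ∑ e ∈ S, s e • vecMulVec (v e) (v e)).PosDef ∧
      (((Fintype.card ι : ℝ) / η + N * (1 + 4 * η)) • 1
        - ∑ e ∈ S, s e • vecMulVec (v e) (v e))⁻¹.trace ≤ η ∧
      (((Fintype.card ι : ℝ) / η - N) • 1
        + ∑ e ∈ S, s e • vecMulVec (v e) (v e)).PosDef ∧
      (((Fintype.card ι : ℝ) / η - N) • 1
        + ∑ e ∈ S, s e • vecMulVec (v e) (v e))⁻¹.trace ≤ η := by
  classical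
  induction N with
  | zero =>
    have hc : (0 : ℝ) < Fintype.card ι := by exact_mod_cast Fintype.card_pos
    have hr : 0 < (Fintype.card ι : ℝ) / η := div_pos hc hη
    have hpos : (((Fintype.card ι : ℝ) / η) • (1 : Matrix ι ι ℝ)).PosDef := PosDef.one.smul hr
    have htr : (((Fintype.card ι : ℝ) / η) • (1 : Matrix ι ι ℝ))⁻¹.trace ≤ η := by
      have : (((Fintype.card ι : ℝ) / η) • (1 : Matrix ι ι ℝ))⁻¹ =
          (η / (Fintype.card ι : ℝ)) • 1 := by
        apply inv_eq_right_inv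
        rw [smul_mul_smul_comm, one_mul, div_mul_div_comm, mul_comm η, div_self (by positivity),
          one_smul]
      rw [this, trace_smul, trace_one, smul_eq_mul, div_mul_cancel₀ _ hc.ne']
    exact ⟨∅, 0, by simp, by simp, by simpa using hpos, by simpa using htr,
      by simpa using hpos, by simpa using htr⟩
  | succ N ih =>
    obtain ⟨S, s, hSE, hS, hU, hUη, hL, hLη⟩ := ih
    obtain ⟨e, heE, t, -, h⟩ := exists_rankOne_update hv hη hη' hU hUη hL hLη
    have hsum : ∑ x ∈ insert e S, ((if x ∈ S then s x else 0) + if x = e then t else 0) •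
        vecMulVec (v x) (v x) = ∑ x ∈ S, s x • vecMulVec (v x) (v x)
          + t • vecMulVec (v e) (v e) := by
      simp only [add_smul, Finset.sum_add_distrib, ite_smul, zero_smul]
      congr 1
      · rw [← Finset.sum_filter]
        refine Finset.sum_congr ?_ fun _ _ => rfl
        ext x
        simp +contextual
      · rw [Finset.sum_ite_eq' (insert e S) e, if_pos (Finset.mem_insert_self e S)]
    refine ⟨insert e S, fun x => (if x ∈ S then s x else 0) + if x = e then t else 0,
      Finset.insert_subset heE hSE, (Finset.card_insert_le e S).trans (by lia), ?_⟩
    rw [hsum]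
    have hU_eq : ((Fintype.card ι : ℝ) / η + (N + 1 : ℕ) * (1 + 4 * η)) • (1 : Matrix ι ι ℝ)
        - (∑ x ∈ S, s x • vecMulVec (v x) (v x) + t • vecMulVec (v e) (v e)) =
        ((Fintype.card ι : ℝ) / η + N * (1 + 4 * η)) • 1
          - ∑ x ∈ S, s x • vecMulVec (v x) (v x) + (1 + 4 * η) • 1
          - t • vecMulVec (v e) (v e) := by
      push_cast
      module
    have hL_eq : ((Fintype.card ι : ℝ) / η - (N + 1 : ℕ)) • (1 : Matrix ι ι ℝ)
        + (∑ x ∈ S, s x • vecMulVec (v x) (v x) + t • vecMulVec (v e) (v e)) =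
        ((Fintype.card ι : ℝ) / η - N) • 1
          + ∑ x ∈ S, s x • vecMulVec (v x) (v x) + (-1 : ℝ) • 1
          + t • vecMulVec (v e) (v e) := by
      push_cast
      module
    rwa [hU_eq, hL_eq]

/-- **Batson–Spielman–Srivastava**: a decomposition of the identity of `ℝ^ι` into rank-one
matrices can be sparsified to `O(|ι| / ε²)` reweighted terms. -/
theorem exists_sparse_reweighting {α : Type*} {E : Finset α} {v : α → ι → ℝ}
    (hv : ∑ e ∈ E, vecMulVec (v e) (v e) = 1) {ε : ℝ} (hε : 0 < ε) (hε' : ε < 1) :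
    ∃ (S : Finset α) (s : α → ℝ), S ⊆ E ∧
      (S.card : ℝ) ≤ 26 * Fintype.card ι / ε ^ 2 ∧
      ∀ y : ι → ℝ, (1 - ε) * (y ⬝ᵥ y) ≤ ∑ e ∈ S, s e * (v e ⬝ᵥ y) ^ 2 ∧
        ∑ e ∈ S, s e * (v e ⬝ᵥ y) ^ 2 ≤ (1 + ε) * (y ⬝ᵥ y) := by
  rcases isEmpty_or_nonempty ι with hι | hι
  · exact ⟨∅, 0, by simp, by simp, fun y => by simp [dotProduct]⟩
  have hc : (1 : ℝ) ≤ Fintype.card ι := by exact_mod_cast Fintype.card_pos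
  set r : ℝ := (Fintype.card ι : ℝ)
  set N := ⌈25 * r / ε ^ 2⌉₊
  have hNge : 25 * r / ε ^ 2 ≤ N := Nat.le_ceil _
  have hNpos : (0 : ℝ) < N := lt_of_lt_of_le (by positivity) hNge
  have hNle : (N : ℝ) ≤ 26 * r / ε ^ 2 := by
    have h1 : (N : ℝ) < 25 * r / ε ^ 2 + 1 := Nat.ceil_lt_add_one (by positivity)
    have h2 : 1 ≤ r / ε ^ 2 := by
      rw [one_le_div (by positivity)]
      nlinarith
    have h3 : 26 * r / ε ^ 2 = 25 * r / ε ^ 2 + r / ε ^ 2 := by ring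
    linarith
  have hrN : r / (ε / 5) ≤ N * (ε / 5) := by
    rw [div_le_iff₀ (by positivity)] at hNge ⊢
    nlinarith
  obtain ⟨S, s, hSE, hS, hU, -, hL, -⟩ :=
    exists_barrier_iterate hv (η := ε / 5) (by positivity) (by linarith) N
  have hquad : ∀ y : ι → ℝ, y ⬝ᵥ (∑ e ∈ S, s e • vecMulVec (v e) (v e)) *ᵥ y =
      ∑ e ∈ S, s e * (v e ⬝ᵥ y) ^ 2 := fun y => by
    rw [sum_mulVec, dotProduct_sum]
    refine Finset.sum_congr rfl fun e _ => ?_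
    rw [smul_mulVec, dotProduct_smul, dotProduct_vecMulVec_self_mulVec, smul_eq_mul]
  refine ⟨S, fun e => s e / N, hSE, le_trans (by exact_mod_cast hS) hNle, fun y => ?_⟩
  have hU' := hU.posSemidef.dotProduct_mulVec_nonneg y
  have hL' := hL.posSemidef.dotProduct_mulVec_nonneg y
  simp only [star_trivial, sub_mulVec, add_mulVec, smul_mulVec, one_mulVec, dotProduct_sub,
    dotProduct_add, dotProduct_smul, hquad, smul_eq_mul] at hU' hL'
  have hyy : 0 ≤ y ⬝ᵥ y := by simpa using dotProduct_star_self_nonneg y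
  have hdiv : ∑ e ∈ S, s e / N * (v e ⬝ᵥ y) ^ 2 = (∑ e ∈ S, s e * (v e ⬝ᵥ y) ^ 2) / N := by
    rw [Finset.sum_div]
    exact Finset.sum_congr rfl fun e _ => by ring
  rw [hdiv, le_div_iff₀ hNpos, div_le_iff₀ hNpos]
  have hmul := mul_le_mul_of_nonneg_right hrN hyy
  have hNy : 0 ≤ N * ε * (y ⬝ᵥ y) := by positivity
  constructor <;> nlinarith

end BarrierArgument

section CutSparsifier

/-- Sparsification of the quadratic form `∑ e, (f e)²` on the range of a linear map into `ℝ^E`. -/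
theorem LinearMap.exists_sparse_reweighting {W α : Type*} [AddCommGroup W] [Module ℝ W]
    [FiniteDimensional ℝ W] {E : Finset α} (T : W →ₗ[ℝ] EuclideanSpace ℝ E) {ε : ℝ}
    (hε : 0 < ε) (hε' : ε < 1) :
    ∃ (S : Finset E) (s : E → ℝ),
      (S.card : ℝ) ≤ 26 * Module.finrank ℝ W / ε ^ 2 ∧
      ∀ x : W, (1 - ε) * ∑ e, T x e ^ 2 ≤ ∑ e ∈ S, s e * T x e ^ 2 ∧
        ∑ e ∈ S, s e * T x e ^ 2 ≤ (1 + ε) * ∑ e, T x e ^ 2 := by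
  set R := LinearMap.range T
  set b := stdOrthonormalBasis ℝ R
  set v : E → Fin (Module.finrank ℝ R) → ℝ := fun e i => (b i : EuclideanSpace ℝ E) e
  have hv : ∑ e ∈ Finset.univ, vecMulVec (v e) (v e) = 1 := by
    ext i j
    have h := orthonormal_iff_ite.1 b.orthonormal i j
    rw [Submodule.coe_inner, PiLp.inner_apply] at h
    rw [Matrix.sum_apply, one_apply, ← h]
    simp only [vecMulVec_apply, v]
    exact Finset.sum_congr rfl fun e _ => by simp [mul_comm]
  obtain ⟨S, s, -, hS, hs⟩ := _root_.exists_sparse_reweighting hv hε hε'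
  refine ⟨S, s, hS.trans ?_, fun x => ?_⟩
  · have : (Module.finrank ℝ R : ℝ) ≤ Module.finrank ℝ W := by
      exact_mod_cast T.finrank_range_le
    rw [Fintype.card_fin]
    gcongr
  · set y : R := ⟨T x, x, rfl⟩
    have hcoord : ∀ e, v e ⬝ᵥ (b.repr y).ofLp = T x e := fun e => by
      have h : ∑ i, b.repr y i • (b i : EuclideanSpace ℝ E) = T x := by
        have h0 := congrArg R.subtype (b.sum_repr y)
        rw [map_sum] at h0
        exact h0
      rw [← h, WithLp.ofLp_sum, Finset.sum_apply]
      exact Finset.sum_congr rfl fun i _ => mul_comm _ _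
    have hnorm : (b.repr y).ofLp ⬝ᵥ (b.repr y).ofLp = ∑ e, T x e ^ 2 := by
      have h1 : ‖b.repr y‖ ^ 2 = ‖(y : EuclideanSpace ℝ E)‖ ^ 2 := by
        rw [b.repr.norm_map, Submodule.coe_norm]
      rw [EuclideanSpace.real_norm_sq_eq, EuclideanSpace.real_norm_sq_eq] at h1
      simpa [dotProduct, sq, y] using h1
    simpa only [hcoord, hnorm] using hs (b.repr y).ofLp

theorem crosses_mk_iff {V : Type} (A : Set V) (a b : V) :
    Crosses A s(a, b) ↔ (a ∈ A ∧ b ∉ A) ∨ (b ∈ A ∧ a ∉ A) := by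
  constructor
  · rintro ⟨u, v, h, hu, hv⟩
    rcases Sym2.eq_iff.1 h with ⟨rfl, rfl⟩ | ⟨rfl, rfl⟩
    · exact Or.inl ⟨hu, hv⟩
    · exact Or.inr ⟨hu, hv⟩
  · rintro (h | h)
    · exact ⟨a, b, rfl, h⟩
    · exact ⟨b, a, Sym2.eq_swap, h⟩

/-- The difference of the indicator of `A` along an edge detects whether the edge crosses `A`. -/
theorem sq_indicator_sub_indicator {V : Type} (A : Set V) (e : Sym2 V) :
    (A.indicator (1 : V → ℝ) (Quot.out e).1 - A.indicator (1 : V → ℝ) (Quot.out e).2) ^ 2 =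
      if Crosses A e then 1 else 0 := by
  have he : e = s((Quot.out e).1, (Quot.out e).2) := (Quot.out_eq e).symm
  conv_rhs => rw [he]
  rw [crosses_mk_iff]
  by_cases h1 : (Quot.out e).1 ∈ A <;> by_cases h2 : (Quot.out e).2 ∈ A <;> simp [h1, h2]

/-- Cut sparsifiers with `O(n / ε²)` edges. -/
theorem exists_cut_sparsifier {V : Type} [Fintype V] (E : Finset (Sym2 V)) {w : Sym2 V → ℝ}
    (hw : ∀ e ∈ E, 0 ≤ w e) {ε : ℝ} (hε : 0 < ε) (hε' : ε < 1) :
    ∃ (EH : Finset (Sym2 V)) (wH : Sym2 V → ℝ), EH ⊆ E ∧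
      (EH.card : ℝ) ≤ 26 * Fintype.card V / ε ^ 2 ∧
      ∀ A : Set V, (1 - ε) * cutWeight E w A ≤ cutWeight EH wH A ∧
        cutWeight EH wH A ≤ (1 + ε) * cutWeight E w A := by
  let T : (V → ℝ) →ₗ[ℝ] EuclideanSpace ℝ E :=
    { toFun := fun x => WithLp.toLp 2 fun e =>
        √(w e) * (x (Quot.out e.1).1 - x (Quot.out e.1).2)
      map_add' := fun x y => by ext e; simp; ring
      map_smul' := fun c x => by ext e; simp; ring }
  have hT : ∀ (A : Set V) (e : E), T (A.indicator 1) e ^ 2 = if Crosses A e.1 then w e else 0 :=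
    fun A e => by
      change (√(w e) * (_ - _)) ^ 2 = _
      rw [mul_pow, sq_indicator_sub_indicator, Real.sq_sqrt (hw e e.2)]
      simp
  obtain ⟨S, s, hS, hs⟩ := T.exists_sparse_reweighting hε hε'
  refine ⟨S.map (Function.Embedding.subtype _),
    fun e => if h : e ∈ E then s ⟨e, h⟩ * w e else 0, ?_, ?_, fun A => ?_⟩
  · intro e he
    obtain ⟨x, -, rfl⟩ := Finset.mem_map.1 he
    exact x.2
  · rw [Finset.card_map]
    simpa using hS
  · have hG : cutWeight E w A = ∑ e, T (A.indicator 1) e ^ 2 := by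
      simp only [hT, cutWeight]
      exact (Finset.sum_coe_sort E fun e => if Crosses A e then w e else 0).symm
    have hH : cutWeight (S.map (Function.Embedding.subtype _))
        (fun e => if h : e ∈ E then s ⟨e, h⟩ * w e else 0) A =
          ∑ e ∈ S, s e * T (A.indicator 1) e ^ 2 := by
      rw [cutWeight, Finset.sum_map]
      refine Finset.sum_congr rfl fun e _ => ?_
      simp [hT]
    rw [hG, hH]
    exact hs _

end CutSparsifier

/-- **Existence of cut sparsifiers of size `O(n log n / ε²)`.**
There is an absolute constant `K > 0` such that every finite weighted graph
on `n ≥ 2` vertices with positive integer edge weights admits, for every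
`ε ∈ (0,1)`, a reweighted subgraph with at most `K·n·log n/ε²` edges which is a
`(1±ε)`-cut sparsifier. -/
theorem stmt_0 :
    ∃ K : ℝ, 0 < K ∧
      ∀ (V : Type) [Fintype V] (E : Finset (Sym2 V)) (w : Sym2 V → ℤ),
        (∀ e ∈ E, ¬ e.IsDiag) →
        (∀ e ∈ E, 0 < w e) →
        2 ≤ Fintype.card V →
        ∀ ε : ℝ, 0 < ε → ε < 1 →
          ∃ (EH : Finset (Sym2 V)) (wH : Sym2 V → ℝ),
            EH ⊆ E ∧
            (EH.card : ℝ) ≤ K * (Fintype.card V : ℝ) * Real.log (Fintype.card V) / ε ^ 2 ∧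
            ∀ A : Set V, A.Nonempty → Aᶜ.Nonempty →
              (1 - ε) * cutWeight E (fun e => (w e : ℝ)) A ≤ cutWeight EH wH A ∧
              cutWeight EH wH A ≤ (1 + ε) * cutWeight E (fun e => (w e : ℝ)) A := by
  refine ⟨52, by norm_num, fun V _ E w _ hw hV ε hε hε' => ?_⟩
  obtain ⟨EH, wH, hE, hcard, hcut⟩ := exists_cut_sparsifier E (w := fun e => (w e : ℝ))
    (fun e he => by exact_mod_cast (hw e he).le) hε hε'
  refine ⟨EH, wH, hE, hcard.trans ?_, fun A _ _ => hcut A⟩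
  have hV' : (2 : ℝ) ≤ Fintype.card V := by exact_mod_cast hV
  have hlog : 1 / 2 ≤ Real.log (Fintype.card V) := by
    have h1 := Real.log_two_gt_d9
    have h2 := Real.log_le_log two_pos hV'
    linarith
  refine div_le_div_of_nonneg_right ?_ (sq_nonneg ε)
  nlinarith
end

section
/- Let V be a finite set of n ≥ 2 vertices, and let R ⊆ Q be finite sets of edges on V with a weight function w satisfying 0 < w(e) ≤ 1 for all e ∈ Q. Assume that every edge e = (u,v) ∈ R is π-heavy in the weighted graph (V, Q, w), i.e., every cut of (V,Q) separating u and v has weight at least π. Suppose each edge e ∈ R is included, independently of all other edges, with probability p ∈ (0,1] in a random set R̂, and each included edge receives weight w(e)/p. For a cut C (determined by a partition of V into two nonempty parts), write r^{(C)} = ∑_{e ∈ R∩C} w(e), q^{(C)} = ∑_{e ∈ Q∩C} w(e), and r̂^{(C)} = ∑_{e ∈ R̂∩C} w(e)/p. Let ζ ≥ 5 be an integer and δ ∈ (0,1] a real number such that δ²·p·π ≥ ζ·ln(n)/0.38. Then with probability at least 1 − 4/n^{ζ−4}, simultaneously for all cuts C: |r^{(C)} − r̂^{(C)}| ≤ δ·q^{(C)}.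 -/
open scoped Classical
open MeasureTheory

/-- The weight of the cut induced by the partition `{A, Aᶜ}` in the edge set `E`. -/
noncomputable def cutW {V : Type} (E : Finset (Sym2 V)) (w : Sym2 V → ℝ) (A : Set V) : ℝ :=
  ∑ e ∈ E, if Crosses A e then w e else 0

/-- The Bernoulli measure on `Bool` with success probability `p`. -/
noncomputable def bernoulliMeasure (p : ℝ) : Measure Bool :=
  (ENNReal.ofReal p) • Measure.dirac true + (ENNReal.ofReal (1 - p)) • Measure.dirac false

theorem crosses_mk {V : Type} {A : Set V} {a b : V} :
    Crosses A s(a, b) ↔ (a ∈ A ∧ b ∉ A) ∨ (b ∈ A ∧ a ∉ A) := by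
  constructor
  · rintro ⟨u, v, h, hu, hv⟩
    rcases Sym2.eq_iff.1 h with ⟨rfl, rfl⟩ | ⟨rfl, rfl⟩
    · exact Or.inl ⟨hu, hv⟩
    · exact Or.inr ⟨hu, hv⟩
  · rintro (⟨h, h'⟩ | ⟨h, h'⟩)
    · exact ⟨a, b, rfl, h, h'⟩
    · exact ⟨b, a, Sym2.eq_swap, h, h'⟩

theorem crosses_compl {V : Type} {A : Set V} {e : Sym2 V} : Crosses Aᶜ e ↔ Crosses A e := by
  induction e with | _ a b
  simp only [crosses_mk, Set.mem_compl_iff]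
  tauto

theorem crosses_map {V W : Type} {f : V → W} {A : Set W} {e : Sym2 V} :
    Crosses A (e.map f) ↔ Crosses (f ⁻¹' A) e := by
  induction e with | _ a b
  simp [crosses_mk]

theorem cutW_compl {V : Type} (E : Finset (Sym2 V)) (w : Sym2 V → ℝ) (A : Set V) :
    cutW E w Aᶜ = cutW E w A := by
  simp only [cutW, crosses_compl]

/-- The vertex set `A` separates some pair of `H`. -/
def Separates {V : Type} (H : Set (Sym2 V)) (A : Set V) : Prop :=
  ∃ e ∈ H, Crosses A e

/-- The vertices incident to a non-loop pair of `H`. -/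
def terminals {V : Type} (H : Set (Sym2 V)) : Set V :=
  {x | Separates H {x}}

theorem separates_compl {V : Type} {H : Set (Sym2 V)} {A : Set V} :
    Separates H Aᶜ ↔ Separates H A := by
  simp only [Separates, crosses_compl]

theorem Separates.of_union {V : Type} {H : Set (Sym2 V)} {A B : Set V}
    (h : Separates H (A ∪ B)) : Separates H A ∨ Separates H B := by
  obtain ⟨e, he, hc⟩ := h
  suffices Crosses A e ∨ Crosses B e from this.imp (⟨e, he, ·⟩) (⟨e, he, ·⟩)
  induction e with | _ a b
  simp only [crosses_mk, Set.mem_union] at *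
  tauto

theorem Separates.uncross {V : Type} {H : Set (Sym2 V)} {X Y : Set V}
    (hX : Separates H X) (hY : Separates H Y) :
    (Separates H (X ∩ Y) ∧ Separates H (X ∪ Y)) ∨
      (Separates H (X \ Y) ∧ Separates H (Y \ X)) := by
  have h1 : Separates H (X ∩ Y) ∨ Separates H (X \ Y) :=
    Separates.of_union (by rwa [Set.inter_union_sdiff])
  have h2 : Separates H (Y ∩ X) ∨ Separates H (Y \ X) :=
    Separates.of_union (by rwa [Set.inter_union_sdiff])
  have h3 : Separates H (Y \ X) ∨ Separates H (X ∪ Y)ᶜ := by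
    refine Separates.of_union ?_
    rw [← separates_compl] at hX
    convert hX using 1
    ext; simp only [Set.mem_union, Set.mem_sdiff, Set.mem_compl_iff]; tauto
  have h4 : Separates H (X \ Y) ∨ Separates H (X ∪ Y)ᶜ := by
    refine Separates.of_union ?_
    rw [← separates_compl] at hY
    convert hY using 1
    ext; simp only [Set.mem_union, Set.mem_sdiff, Set.mem_compl_iff]; tauto
  rw [separates_compl] at h3 h4
  rw [Set.inter_comm] at h2
  tauto

theorem ne_of_crosses_of_notMem_terminals {V : Type} {H : Set (Sym2 V)} {s a b : V}
    (hs : s ∉ terminals H) (he : s(a, b) ∈ H) (hab : a ≠ b) : a ≠ s ∧ b ≠ s := by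
  constructor
  · rintro rfl
    exact hs ⟨_, he, crosses_mk.2 (Or.inl ⟨rfl, hab.symm⟩)⟩
  · rintro rfl
    exact hs ⟨_, he, crosses_mk.2 (Or.inr ⟨rfl, hab⟩)⟩

theorem Separates.insert {V : Type} {H : Set (Sym2 V)} {s : V} {X : Set V}
    (hs : s ∉ terminals H) (hX : Separates H X) : Separates H (insert s X) := by
  obtain ⟨e, he, u, v, rfl, hu, hv⟩ := hX
  have huv : u ≠ v := by rintro rfl; exact hv hu
  have := ne_of_crosses_of_notMem_terminals hs he huv
  exact ⟨_, he, crosses_mk.2 (Or.inl ⟨Or.inr hu, by simp [this.2, hv]⟩)⟩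

theorem update_preimage_eq {V : Type} {A : Set V} {u v : V} (h : ¬ Crosses A s(u, v)) :
    Function.update id u v ⁻¹' A = A := by
  ext a
  rw [crosses_mk] at h
  by_cases ha : a = u
  · subst ha
    simp only [Set.mem_preimage, Function.update_self]
    tauto
  · simp [ha]

section CutCounting

variable {V : Type} [Fintype V]

/-- Every vertex set separating a pair of `H` has a cut of weight at least `c`. -/
def HeavyFor (c : ℝ) (H : Set (Sym2 V)) (x : Sym2 V → ℝ) : Prop :=
  ∀ A, Separates H A → c ≤ cutW Finset.univ x A

theorem cutW_add_smul (x z : Sym2 V → ℝ) (a : ℝ) (A : Set V) :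
    cutW Finset.univ (x + a • z) A = cutW Finset.univ x A + a * cutW Finset.univ z A := by
  simp only [cutW, Finset.mul_sum, ← Finset.sum_add_distrib]
  refine Finset.sum_congr rfl fun e _ => ?_
  split_ifs <;> simp

theorem cutW_single (e : Sym2 V) (A : Set V) :
    cutW Finset.univ (Pi.single e 1) A = if Crosses A e then 1 else 0 := by
  rw [cutW, Finset.sum_eq_single e]
  · simp
  · intro b _ hb
    simp [hb]
  · simp

theorem cutW_inter_add_union_le {x : Sym2 V → ℝ} (hx : ∀ e, 0 ≤ x e) (X Y : Set V) :
    cutW Finset.univ x (X ∩ Y) + cutW Finset.univ x (X ∪ Y) ≤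
      cutW Finset.univ x X + cutW Finset.univ x Y := by
  simp only [cutW, ← Finset.sum_add_distrib]
  refine Finset.sum_le_sum fun e _ => ?_
  have := hx e
  induction e with | _ a b
  by_cases h1 : a ∈ X <;> by_cases h2 : b ∈ X <;> by_cases h3 : a ∈ Y <;> by_cases h4 : b ∈ Y <;>
    simp [crosses_mk, h1, h2, h3, h4] <;> linarith

theorem cutW_sdiff_add_sdiff_lt {x : Sym2 V → ℝ} (hx : ∀ e, 0 ≤ x e) {X Y : Set V} {s u : V}
    (hsu : 0 < x s(s, u)) (huX : u ∈ X) (huY : u ∈ Y) (hsX : s ∉ X) (hsY : s ∉ Y) :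
    cutW Finset.univ x (X \ Y) + cutW Finset.univ x (Y \ X) <
      cutW Finset.univ x X + cutW Finset.univ x Y := by
  simp only [cutW, ← Finset.sum_add_distrib]
  refine Finset.sum_lt_sum (fun e _ => ?_) ⟨s(s, u), Finset.mem_univ _, ?_⟩
  · have := hx e
    induction e with | _ a b
    by_cases h1 : a ∈ X <;> by_cases h2 : b ∈ X <;> by_cases h3 : a ∈ Y <;>
      by_cases h4 : b ∈ Y <;> simp [crosses_mk, h1, h2, h3, h4] <;> linarith
  · simp [crosses_mk, *]

theorem exists_pos_le_slack (c : ℝ) (x : Sym2 V → ℝ) :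
    ∃ ε > 0, ∀ A, c < cutW Finset.univ x A → 2 * ε ≤ cutW Finset.univ x A - c := by
  obtain ⟨A₀, h⟩ := Finite.exists_min fun A : Set V =>
    if c < cutW Finset.univ x A then (cutW Finset.univ x A - c) / 2 else 1
  refine ⟨if c < cutW Finset.univ x A₀ then (cutW Finset.univ x A₀ - c) / 2 else 1,
    ?_, fun A hA => ?_⟩
  · split_ifs <;> linarith
  · have := h A
    rw [if_pos hA] at this
    linarith

theorem HeavyFor.exists_improvement {c : ℝ} {H : Set (Sym2 V)} {x : Sym2 V → ℝ}
    (hx : ∀ e, 0 ≤ x e) (hd : ∀ v, x s(v, v) = 0) (hh : HeavyFor c H x) {s u : V}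
    (hs : s ∉ terminals H) (hsu : 0 < x s(s, u)) :
    ∃ y : Sym2 V → ℝ, (∀ e, 0 ≤ y e) ∧ (∀ v, y s(v, v) = 0) ∧ HeavyFor c H y ∧
      (∀ A, cutW Finset.univ y A ≤ cutW Finset.univ x A) ∧
      cutW Finset.univ y {s} < cutW Finset.univ x {s} := by
  obtain ⟨ε, hε, hslack⟩ := exists_pos_le_slack c x
  have ne_of_pos : ∀ v, 0 < x s(s, v) → v ≠ s := by
    rintro v hv rfl
    exact hv.ne' (hd v)
  have hus := ne_of_pos u hsu
  by_cases htight : ∃ X, (Separates H X ∧ cutW Finset.univ x X = c) ∧ u ∈ X ∧ s ∉ X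
  · obtain ⟨X, hXmax⟩ := (Set.toFinite
      {X | (Separates H X ∧ cutW Finset.univ x X = c) ∧ u ∈ X ∧ s ∉ X}).exists_maximal htight
    obtain ⟨⟨hXsep, hXc⟩, huX, hsX⟩ := hXmax.prop
    obtain ⟨v, hsv, hvX⟩ : ∃ v, 0 < x s(s, v) ∧ v ∉ X := by
      by_contra! hno
      have hlt : cutW Finset.univ x (insert s X) < cutW Finset.univ x X := by
        refine Finset.sum_lt_sum (fun e _ => ?_) ⟨s(s, u), Finset.mem_univ _, ?_⟩
        · rcases (hx e).eq_or_lt with h0 | h0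
          · simp [← h0]
          split_ifs with h1 h2
          · exact le_rfl
          · exfalso
            obtain ⟨a, b, rfl, ha, hb⟩ := h1
            rcases ha with rfl | ha
            · exact hb (Or.inr (hno b h0))
            · exact h2 ⟨a, b, rfl, ha, fun h => hb (Or.inr h)⟩
          · exact h0.le
          · exact le_rfl
        · simp [crosses_mk, huX, hsX, hsu]
      linarith [hh _ (hXsep.insert hs)]
    have hvs := ne_of_pos v hsv
    have huv : u ≠ v := by rintro rfl; exact hvX huX
    have hnot : ∀ Y, Separates H Y → u ∈ Y → v ∈ Y → s ∉ Y → c < cutW Finset.univ x Y := by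
      intro Y hY huY hvY hsY
      refine (hh Y hY).lt_of_ne fun hYc => ?_
      rcases hXsep.uncross hY with ⟨h1, h2⟩ | ⟨h1, h2⟩
      · have h3 := cutW_inter_add_union_le hx X Y
        have h4 : cutW Finset.univ x (X ∪ Y) = c := by linarith [hh _ h1, hh _ h2]
        exact hvX (hXmax.le_of_ge (y := X ∪ Y)
          ⟨⟨h2, h4⟩, Or.inl huX, by simp [hsX, hsY]⟩ Set.subset_union_left (Or.inr hvY))
      · linarith [hh _ h1, hh _ h2, cutW_sdiff_add_sdiff_lt hx hsu huX huY hsX hsY]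
    have hnot' : ∀ Y, Separates H Y → u ∉ Y → v ∉ Y → s ∈ Y → c < cutW Finset.univ x Y := by
      intro Y hY hu hv hs'
      rw [← cutW_compl]
      exact hnot _ (separates_compl.2 hY) hu hv (by simpa using hs')
    set η := min ε (min (x s(s, u)) (x s(s, v))) with hη
    have hη0 : 0 < η := by simp [hη, hε, hsu, hsv]
    have hηε : η ≤ ε := min_le_left _ _
    have hηu : η ≤ x s(s, u) := (min_le_right _ _).trans (min_le_left _ _)
    have hηv : η ≤ x s(s, v) := (min_le_right _ _).trans (min_le_right _ _)
    have hcut : ∀ A, cutW Finset.univ (x + η • Pi.single s(u, v) 1 + (-η) • Pi.single s(s, u) 1 +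
        (-η) • Pi.single s(s, v) 1) A = cutW Finset.univ x A +
        η * (if Crosses A s(u, v) then 1 else 0) - η * (if Crosses A s(s, u) then 1 else 0) -
        η * (if Crosses A s(s, v) then 1 else 0) := by
      intro A
      simp only [cutW_add_smul, cutW_single]
      ring
    refine ⟨x + η • Pi.single s(u, v) 1 + (-η) • Pi.single s(s, u) 1 +
      (-η) • Pi.single s(s, v) 1, ?_, ?_, fun A hA => ?_, fun A => ?_, ?_⟩
    · intro e
      have h1 : s(s, u) ≠ s(s, v) := by
        intro h; rcases Sym2.eq_iff.1 h with ⟨-, h⟩ | ⟨rfl, rfl⟩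
        exacts [huv h, huv rfl]
      have hxe := hx e
      simp only [Pi.add_apply, Pi.smul_apply, Pi.single_apply, smul_eq_mul]
      by_cases h2 : e = s(s, u)
      · subst h2
        simp only [h1, if_true, if_false]
        split_ifs <;> linarith
      · by_cases h3 : e = s(s, v)
        · subst h3
          simp only [h1.symm, if_true, if_false]
          split_ifs <;> linarith
        · simp only [h2, h3, if_false]
          split_ifs <;> linarith
    · intro a
      have h1 : s(a, a) ≠ s(u, v) := by
        intro h; rcases Sym2.eq_iff.1 h with ⟨rfl, rfl⟩ | ⟨rfl, rfl⟩ <;> exact huv rfl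
      have h2 : s(a, a) ≠ s(s, u) := by
        intro h; rcases Sym2.eq_iff.1 h with ⟨rfl, rfl⟩ | ⟨rfl, rfl⟩ <;> exact hus rfl
      have h3 : s(a, a) ≠ s(s, v) := by
        intro h; rcases Sym2.eq_iff.1 h with ⟨rfl, rfl⟩ | ⟨rfl, rfl⟩ <;> exact hvs rfl
      simp [h1, h2, h3, hd]
    · have h1 := hh A hA
      have h2 := hnot A hA
      have h3 := hnot' A hA
      have h4 := hslack A
      rw [hcut]
      by_cases hu : u ∈ A <;> by_cases hv : v ∈ A <;> by_cases hs' : s ∈ A <;>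
        simp only [crosses_mk, hu, hv, hs', not_true, not_false_iff, and_true, and_false,
          or_true, or_false, if_true, if_false, forall_const] at h2 h3 ⊢ <;>
        first | linarith | linarith [h4 h2] | linarith [h4 h3]
    · rw [hcut]
      by_cases hu : u ∈ A <;> by_cases hv : v ∈ A <;> by_cases hs' : s ∈ A <;>
        simp [crosses_mk, hu, hv, hs'] <;> linarith
    · rw [hcut]
      simp [crosses_mk, hus, hvs]
      linarith
  · have hnot : ∀ Y, Separates H Y → u ∈ Y → s ∉ Y → c < cutW Finset.univ x Y :=
      fun Y hY hu hs' => (hh Y hY).lt_of_ne fun h => htight ⟨Y, ⟨hY, h.symm⟩, hu, hs'⟩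
    have hnot' : ∀ Y, Separates H Y → Crosses Y s(s, u) → c < cutW Finset.univ x Y := by
      intro Y hY hc
      rcases crosses_mk.1 hc with ⟨h1, h2⟩ | ⟨h1, h2⟩
      · rw [← cutW_compl]
        exact hnot _ (separates_compl.2 hY) h2 (by simpa using h1)
      · exact hnot Y hY h1 h2
    set η := min ε (x s(s, u)) with hη
    have hη0 : 0 < η := by simp [hη, hε, hsu]
    have hηε : η ≤ ε := min_le_left _ _
    have hηu : η ≤ x s(s, u) := min_le_right _ _
    have hcut : ∀ A, cutW Finset.univ (x + (-η) • Pi.single s(s, u) 1) A =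
        cutW Finset.univ x A - η * (if Crosses A s(s, u) then 1 else 0) := by
      intro A
      simp only [cutW_add_smul, cutW_single]
      ring
    refine ⟨x + (-η) • Pi.single s(s, u) 1, ?_, ?_, fun A hA => ?_, fun A => ?_, ?_⟩
    · intro e
      have hxe := hx e
      simp only [Pi.add_apply, Pi.smul_apply, Pi.single_apply, smul_eq_mul]
      by_cases h2 : e = s(s, u)
      · subst h2
        simp only [if_true]
        linarith
      · simpa [h2] using hxe
    · intro a
      have h2 : s(a, a) ≠ s(s, u) := by
        intro h; rcases Sym2.eq_iff.1 h with ⟨rfl, rfl⟩ | ⟨rfl, rfl⟩ <;> exact hus rfl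
      simp [h2, hd]
    · rw [hcut]
      split_ifs with h
      · linarith [hslack A (hnot' A hA h)]
      · linarith [hh A hA]
    · rw [hcut]
      split_ifs <;> linarith
    · rw [hcut]
      simp [crosses_mk, hus]
      linarith

theorem HeavyFor.exists_isolating {c : ℝ} {H : Set (Sym2 V)} {x : Sym2 V → ℝ}
    (hx : ∀ e, 0 ≤ x e) (hd : ∀ v, x s(v, v) = 0) (hh : HeavyFor c H x) :
    ∃ y : Sym2 V → ℝ, (∀ e, 0 ≤ y e) ∧ (∀ v, y s(v, v) = 0) ∧ HeavyFor c H y ∧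
      (∀ A, cutW Finset.univ y A ≤ cutW Finset.univ x A) ∧
      ∀ s ∉ terminals H, ∀ v, y s(s, v) = 0 := by
  have hcont : ∀ A : Set V, Continuous fun y : Sym2 V → ℝ => cutW Finset.univ y A := by
    intro A
    unfold cutW
    refine continuous_finsetSum _ fun e _ => ?_
    split_ifs <;> fun_prop
  set K : Set (Sym2 V → ℝ) := {y | (∀ e, 0 ≤ y e) ∧ (∀ v, y s(v, v) = 0) ∧ HeavyFor c H y ∧
      (∀ A, cutW Finset.univ y A ≤ cutW Finset.univ x A)} with hK
  have hle : ∀ y ∈ K, ∀ e, y e ≤ ∑ f, x f := by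
    rintro y ⟨hy, hyd, -, hyc⟩ e
    have hsum : ∀ A, cutW Finset.univ x A ≤ ∑ f, x f := fun A => Finset.sum_le_sum fun f _ => by
      split_ifs
      · exact le_rfl
      · exact hx f
    induction e with | _ a b
    by_cases hab : a = b
    · subst hab
      rw [hyd]
      exact Finset.sum_nonneg fun f _ => hx f
    · refine le_trans ?_ ((hyc {a}).trans (hsum _))
      have hc : Crosses {a} s(a, b) := crosses_mk.2 (Or.inl ⟨rfl, fun h => hab h.symm⟩)
      have := Finset.single_le_sum (s := Finset.univ)
        (f := fun e => if Crosses {a} e then y e else 0)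
        (fun e _ => by split_ifs; exacts [hy e, le_rfl]) (Finset.mem_univ s(a, b))
      rw [if_pos hc] at this
      exact this
  have hKclosed : IsClosed K := by
    simp only [hK, HeavyFor, Set.ofPred_and, Set.ofPred_forall]
    refine IsClosed.inter ?_ (IsClosed.inter ?_ (IsClosed.inter ?_ ?_))
    · exact isClosed_iInter fun e => isClosed_le continuous_const (continuous_apply e)
    · exact isClosed_iInter fun v => isClosed_eq (continuous_apply _) continuous_const
    · exact isClosed_iInter fun A => isClosed_iInter fun _ =>
        isClosed_le continuous_const (hcont A)
    · exact isClosed_iInter fun A => isClosed_le (hcont A) continuous_const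
  have hKcompact : IsCompact K :=
    (isCompact_Icc (a := (fun _ => 0 : Sym2 V → ℝ)) (b := fun _ => ∑ f, x f)).of_isClosed_subset
      hKclosed fun y hy => ⟨hy.1, hle y hy⟩
  obtain ⟨y, hyK, hymin⟩ := hKcompact.exists_isMinOn ⟨x, hx, hd, hh, fun _ => le_rfl⟩
    (f := fun y => ∑ s with s ∉ terminals H, cutW Finset.univ y {s})
    (continuous_finsetSum _ fun s _ => hcont {s}).continuousOn
  obtain ⟨hy, hyd, hyh, hyc⟩ := hyK
  refine ⟨y, hy, hyd, hyh, hyc, fun s hs u => ?_⟩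
  by_contra hne
  obtain ⟨z, hz, hzd, hzh, hzc, hlt⟩ :=
    hyh.exists_improvement hy hyd hs ((hy s(s, u)).lt_of_ne' hne)
  refine absurd (isMinOn_iff.1 hymin z ⟨hz, hzd, hzh, fun A => (hzc A).trans (hyc A)⟩)
    (not_le.2 ?_)
  exact Finset.sum_lt_sum (fun v _ => hzc _) ⟨s, by simp [hs], hlt⟩

theorem card_le_two_pow_ncard_terminals {H : Set (Sym2 V)} {F : Finset (Set V)}
    (hinj : ∀ A ∈ F, ∀ B ∈ F, (∀ e ∈ H, Crosses A e ↔ Crosses B e) → A = B) :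
    F.card ≤ 2 ^ (terminals H).ncard := by
  rw [Set.ncard_eq_toFinset_card', ← Finset.card_powerset]
  refine Finset.card_le_card_of_injOn (fun A => (A ∩ terminals H).toFinset) ?_ ?_
  · intro A _
    simp
  · intro A hA B hB hAB
    have hAB' : A ∩ terminals H = B ∩ terminals H := Set.toFinset_inj.1 hAB
    refine hinj A hA B hB fun e he => ?_
    induction e with | _ a b
    by_cases hab : a = b
    · subst hab
      simp [crosses_mk]
    · have ha : a ∈ terminals H := ⟨_, he, crosses_mk.2 (Or.inl ⟨rfl, fun h => hab h.symm⟩)⟩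
      have hb : b ∈ terminals H := ⟨_, he, crosses_mk.2 (Or.inr ⟨rfl, hab⟩)⟩
      have h1 : a ∈ A ↔ a ∈ B := by
        have := Set.ext_iff.1 hAB' a
        simpa [ha] using this
      have h2 : b ∈ A ↔ b ∈ B := by
        have := Set.ext_iff.1 hAB' b
        simpa [hb] using this
      simp only [crosses_mk, h1, h2]

theorem HeavyFor.exists_contraction {c : ℝ} {H : Set (Sym2 V)} {x : Sym2 V → ℝ}
    (hx : ∀ e, 0 ≤ x e) (hh : HeavyFor c H x) {u v : V}
    (huv : u ≠ v) (hu : u ∈ terminals H) (hv : v ∈ terminals H) :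
    ∃ (H' : Set (Sym2 V)) (y : Sym2 V → ℝ), (∀ e, 0 ≤ y e) ∧ (∀ v, y s(v, v) = 0) ∧
      HeavyFor c H' y ∧ (terminals H').ncard < (terminals H).ncard ∧
      (∀ A, ¬ Crosses A s(u, v) → cutW Finset.univ y A = cutW Finset.univ x A) ∧
      ∀ A B, ¬ Crosses A s(u, v) → ¬ Crosses B s(u, v) →
        (∀ e ∈ H', Crosses A e ↔ Crosses B e) → ∀ e ∈ H, Crosses A e ↔ Crosses B e := by
  set φ : V → V := Function.update id u v with hφ
  set y : Sym2 V → ℝ := fun f =>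
    ∑ e with e.map φ = f, if f.IsDiag then 0 else x e with hy
  have hcut : ∀ A, cutW Finset.univ y A = cutW Finset.univ x (φ ⁻¹' A) := by
    intro A
    simp only [cutW, ← crosses_map]
    refine Eq.trans ?_ (Finset.sum_fiberwise Finset.univ (Sym2.map φ) _)
    refine Finset.sum_congr rfl fun f _ => ?_
    refine Eq.trans ?_ (Finset.sum_congr rfl fun e he => by
      rw [(Finset.mem_filter.1 he).2]).symm
    split_ifs with h
    · have hdiag : ¬ f.IsDiag := by
        obtain ⟨a, b, rfl, ha, hb⟩ := h
        exact fun hab => hb (Sym2.mk_isDiag_iff.1 hab ▸ ha)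
      simp [hy, hdiag]
    · simp
  have hsep : ∀ A, Separates (Sym2.map φ '' H) A ↔ Separates H (φ ⁻¹' A) := by
    intro A
    simp [Separates, crosses_map]
  refine ⟨Sym2.map φ '' H, y, fun f => ?_, fun a => ?_, fun A hA => ?_, ?_, fun A hA => ?_,
    fun A B hA hB hAB e he => ?_⟩
  · refine Finset.sum_nonneg fun e _ => ?_
    split_ifs
    exacts [le_rfl, hx e]
  · simp [hy]
  · rw [hcut]
    exact hh _ ((hsep A).1 hA)
  · refine Set.ncard_lt_ncard ?_
    refine (Set.ssubset_iff_of_subset ?_).2 ⟨u, hu, ?_⟩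
    · intro a ha
      have ha' := (hsep _).1 ha
      by_cases hau : a = u
      · rwa [hau]
      by_cases hav : a = v
      · rwa [hav]
      rw [update_preimage_eq] at ha'
      · exact ha'
      · rw [crosses_mk]
        rintro (⟨h, -⟩ | ⟨h, -⟩)
        exacts [hau h.symm, hav h.symm]
    · intro hu'
      obtain ⟨e, -, a, b, -, ha, -⟩ := (hsep _).1 hu'
      by_cases hau : a = u
      · subst hau
        exact huv (by simpa [hφ] using ha.symm)
      · simp [hφ, hau] at ha
  · rw [hcut, update_preimage_eq hA]
  · have := hAB _ (Set.mem_image_of_mem _ he)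
    rwa [crosses_map, crosses_map, update_preimage_eq hA, update_preimage_eq hB] at this

theorem mul_ncard_terminals_le {c : ℝ} {H : Set (Sym2 V)} {x : Sym2 V → ℝ}
    (hx : ∀ e, 0 ≤ x e) (hh : HeavyFor c H x) :
    c * (terminals H).ncard ≤ 2 * ∑ e, x e := by
  calc c * (terminals H).ncard = ∑ v ∈ (terminals H).toFinset, c := by
        rw [Set.ncard_eq_toFinset_card', Finset.sum_const, nsmul_eq_mul, mul_comm]
    _ ≤ ∑ v ∈ (terminals H).toFinset, cutW Finset.univ x {v} :=
        Finset.sum_le_sum fun v hv => hh _ ((Set.mem_toFinset (s := terminals H)).1 hv)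
    _ ≤ ∑ v, cutW Finset.univ x {v} := by
        refine Finset.sum_le_univ_sum_of_nonneg fun v => Finset.sum_nonneg fun e _ => ?_
        split_ifs
        exacts [hx e, le_rfl]
    _ = ∑ e, ∑ v, if Crosses {v} e then x e else 0 := Finset.sum_comm
    _ ≤ ∑ e, 2 * x e := by
        refine Finset.sum_le_sum fun e _ => ?_
        rw [← Finset.sum_filter, Finset.sum_const, nsmul_eq_mul]
        refine mul_le_mul_of_nonneg_right ?_ (hx e)
        induction e with | _ a b
        have hsub : (Finset.univ.filter fun v => Crosses {v} s(a, b)) ⊆ {a, b} := by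
          intro v hv
          have := (Finset.mem_filter.1 hv).2
          simp only [crosses_mk, Set.mem_singleton_iff] at this
          simp only [Finset.mem_insert, Finset.mem_singleton]
          rcases this with ⟨h, -⟩ | ⟨h, -⟩
          exacts [Or.inl h.symm, Or.inr h.symm]
        exact_mod_cast (Finset.card_le_card hsub).trans Finset.card_le_two
    _ = 2 * ∑ e, x e := by rw [Finset.mul_sum]

/-- Distinct traces on `H` of cuts of weight at most `t * c / 2` are few, if all pairs in `H`
are `c`-heavy. -/
theorem card_le_choose_of_heavyFor {c : ℝ} (hc : 0 < c) (t j : ℕ) {H : Set (Sym2 V)}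
    {x : Sym2 V → ℝ} (hx : ∀ e, 0 ≤ x e) (hd : ∀ v, x s(v, v) = 0) (hh : HeavyFor c H x)
    (hcard : (terminals H).ncard ≤ t + j) {F : Finset (Set V)}
    (hF : ∀ A ∈ F, cutW Finset.univ x A ≤ t * c / 2)
    (hinj : ∀ A ∈ F, ∀ B ∈ F, (∀ e ∈ H, Crosses A e ↔ Crosses B e) → A = B) :
    F.card ≤ 2 ^ t * (t + j).choose t := by
  induction j generalizing H x F with
  | zero =>
    simpa using (card_le_two_pow_ncard_terminals hinj).trans
      (Nat.pow_le_pow_right two_pos hcard)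
  | succ j ih =>
    rcases hcard.lt_or_eq with hlt | hm
    · exact (ih hx hd hh (by omega) hF hinj).trans
        (Nat.mul_le_mul_left _ (Nat.choose_le_choose _ (by omega)))
    obtain ⟨y, hy, hyd, hyh, hyc, hyi⟩ := hh.exists_isolating hx hd
    set W := ∑ e, y e with hW
    set B := 2 ^ t * (t + j).choose t with hB
    have hWm : c * (t + j + 1) ≤ 2 * W := by
      have := mul_ncard_terminals_le hy hyh
      rw [hm] at this
      push_cast at this
      linarith
    have hedge : ∀ e, y e * (F.filter fun A => ¬ Crosses A e).card ≤ y e * B := by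
      intro e
      rcases (hy e).eq_or_lt with h0 | h0
      · simp [← h0]
      refine mul_le_mul_of_nonneg_left ?_ h0.le
      induction e with | _ u v
      have huv : u ≠ v := by rintro rfl; exact h0.ne' (hyd u)
      have hu : u ∈ terminals H := by
        by_contra h
        exact h0.ne' (hyi u h v)
      have hv : v ∈ terminals H := by
        by_contra h
        rw [Sym2.eq_swap] at h0
        exact h0.ne' (hyi v h u)
      obtain ⟨H', z, hz, hzd, hzh, hzT, hzc, hzinj⟩ := hyh.exists_contraction hy huv hu hv
      refine Nat.cast_le.2 (ih hz hzd hzh (by omega) ?_ ?_)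
      · intro A hA
        obtain ⟨hA, hAe⟩ := Finset.mem_filter.1 hA
        rw [hzc A hAe]
        exact (hyc A).trans (hF A hA)
      · intro A hA A' hA' h
        obtain ⟨hA, hAe⟩ := Finset.mem_filter.1 hA
        obtain ⟨hA', hAe'⟩ := Finset.mem_filter.1 hA'
        exact hinj A hA A' hA' (hzinj A A' hAe hAe' h)
    have hdouble : ∑ e, y e * (F.filter fun A => ¬ Crosses A e).card =
        ∑ A ∈ F, (W - cutW Finset.univ y A) := by
      simp only [hW, cutW, ← Finset.sum_sub_distrib]
      rw [Finset.sum_comm]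
      refine Finset.sum_congr rfl fun e _ => ?_
      rw [mul_comm, ← nsmul_eq_mul, ← Finset.sum_const, Finset.sum_filter]
      refine Finset.sum_congr rfl fun A _ => ?_
      split_ifs <;> simp
    have hmain : F.card * (2 * W - t * c) ≤ 2 * W * B := by
      have h1 : ∑ A ∈ F, (W - t * c / 2) ≤ ∑ A ∈ F, (W - cutW Finset.univ y A) :=
        Finset.sum_le_sum fun A hA => by linarith [hyc A, hF A hA]
      have h2 := Finset.sum_le_sum fun e (_ : e ∈ Finset.univ) => hedge e
      rw [hdouble, ← Finset.sum_mul] at h2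
      rw [Finset.sum_const, nsmul_eq_mul] at h1
      linarith
    have hnat : F.card * (j + 1) ≤ (t + j + 1) * B := by
      by_contra! hcon
      have hcon' : ((t : ℝ) + j + 1) * B < F.card * (j + 1) := by exact_mod_cast hcon
      have hBF : (B : ℝ) ≤ F.card := by
        by_contra! h
        have : (F.card : ℝ) * (j + 1) ≤ B * (t + j + 1) := by
          apply mul_le_mul h.le _ (by positivity) (by positivity)
          linarith [(Nat.cast_nonneg t : (0 : ℝ) ≤ t)]
        linarith
      nlinarith [mul_le_mul_of_nonneg_right hBF (sub_nonneg.2 hWm),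
        mul_lt_mul_of_pos_left hcon' hc]
    refine Nat.le_of_mul_le_mul_right (hnat.trans ?_) (Nat.succ_pos j)
    have := Nat.choose_mul_succ_eq (t + j) t
    rw [show t + j + 1 - t = j + 1 by omega] at this
    rw [hB, show t + (j + 1) = t + j + 1 by ring]
    apply le_of_eq
    calc (t + j + 1) * (2 ^ t * (t + j).choose t)
        = 2 ^ t * ((t + j).choose t * (t + j + 1)) := by ring
      _ = _ := by rw [this, mul_assoc]

theorem card_le_pow_of_heavyFor {c : ℝ} (hc : 0 < c) {t : ℕ} (ht : 4 ≤ t) {H : Set (Sym2 V)}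
    (hV : 2 ≤ Fintype.card V)
    {x : Sym2 V → ℝ} (hx : ∀ e, 0 ≤ x e) (hd : ∀ v, x s(v, v) = 0) (hh : HeavyFor c H x)
    {F : Finset (Set V)} (hF : ∀ A ∈ F, cutW Finset.univ x A ≤ t * c / 2)
    (hinj : ∀ A ∈ F, ∀ B ∈ F, (∀ e ∈ H, Crosses A e ↔ Crosses B e) → A = B) :
    F.card ≤ Fintype.card V ^ t := by
  have hT : (terminals H).ncard ≤ Fintype.card V := by
    rw [← Nat.card_eq_fintype_card]
    exact Set.ncard_le_card _
  rcases le_total (Fintype.card V) t with h | h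
  · exact (card_le_two_pow_ncard_terminals hinj).trans
      ((Nat.pow_le_pow_right two_pos (hT.trans h)).trans (Nat.pow_le_pow_left hV t))
  · obtain ⟨j, hj⟩ := Nat.exists_eq_add_of_le h
    have h1 := card_le_choose_of_heavyFor hc t j hx hd hh (hj ▸ hT) hF hinj
    rw [← hj] at h1
    have h2 : ∀ k, 2 ^ (4 + k) ≤ (4 + k).factorial := by
      intro k
      induction k with
      | zero => decide
      | succ k ih =>
        rw [← add_assoc, pow_succ, Nat.factorial_succ, mul_comm]
        exact Nat.mul_le_mul (by omega) ih
    obtain ⟨k, rfl⟩ := Nat.exists_eq_add_of_le ht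
    calc F.card ≤ _ := h1
      _ ≤ (4 + k).factorial * (Fintype.card V).choose (4 + k) := Nat.mul_le_mul_right _ (h2 k)
      _ = (Fintype.card V).descFactorial (4 + k) :=
        (Nat.descFactorial_eq_factorial_mul_choose _ _).symm
      _ ≤ _ := Nat.descFactorial_le_pow _ _

end CutCounting

section Chernoff

theorem isProbabilityMeasure_bernoulliMeasure {p : ℝ} (hp0 : 0 ≤ p) (hp1 : p ≤ 1) :
    IsProbabilityMeasure (bernoulliMeasure p) := by
  constructor
  rw [bernoulliMeasure, Measure.add_apply, Measure.smul_apply, Measure.smul_apply,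
    measure_univ, measure_univ, smul_eq_mul, smul_eq_mul, mul_one, mul_one,
    ← ENNReal.ofReal_add hp0 (by linarith)]
  simp

theorem integral_bernoulliMeasure {p : ℝ} (hp0 : 0 ≤ p) (hp1 : p ≤ 1) (f : Bool → ℝ) :
    ∫ b, f b ∂(bernoulliMeasure p) = p * f true + (1 - p) * f false := by
  rw [bernoulliMeasure, integral_add_measure, integral_smul_measure, integral_smul_measure,
    integral_dirac, integral_dirac, ENNReal.toReal_ofReal hp0,
    ENNReal.toReal_ofReal (by linarith), smul_eq_mul, smul_eq_mul]
  · exact Integrable.of_finite.smul_measure ENNReal.ofReal_ne_top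
  · exact Integrable.of_finite.smul_measure ENNReal.ofReal_ne_top

theorem centered_bernoulli_mgf_le {p c : ℝ} (hp0 : 0 ≤ p) (hc0 : 0 ≤ c) (hc1 : c ≤ 1) (s : ℝ) :
    p * Real.exp (s * (c - p * c)) + (1 - p) * Real.exp (s * (0 - p * c)) ≤
      Real.exp (p * (Real.exp s - 1 - s) * c) := by
  have hconv : Real.exp (s * c) ≤ c * Real.exp s + (1 - c) := by
    have := convexOn_exp.2 (Set.mem_univ s) (Set.mem_univ 0) hc0 (sub_nonneg.2 hc1) (by ring)
    simpa [mul_comm] using this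
  have h1 : p * (Real.exp (s * c) - 1) + 1 ≤ Real.exp (p * (c * (Real.exp s - 1))) :=
    le_trans (by nlinarith) (Real.add_one_le_exp _)
  calc p * Real.exp (s * (c - p * c)) + (1 - p) * Real.exp (s * (0 - p * c))
      = Real.exp (-(s * p * c)) * (p * (Real.exp (s * c) - 1) + 1) := by
        rw [show s * (c - p * c) = -(s * p * c) + s * c by ring, Real.exp_add,
          show s * (0 - p * c) = -(s * p * c) by ring]
        ring
    _ ≤ Real.exp (-(s * p * c)) * Real.exp (p * (c * (Real.exp s - 1))) := by gcongr
    _ = Real.exp (p * (Real.exp s - 1 - s) * c) := by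
        rw [← Real.exp_add]
        congr 1
        ring

variable {ι : Type*} [Fintype ι]

theorem measure_centered_sum_ge_le {p : ℝ} (hp0 : 0 ≤ p) (hp1 : p ≤ 1) {c : ι → ℝ}
    (hc0 : ∀ i, 0 ≤ c i) (hc1 : ∀ i, c i ≤ 1) (s K : ℝ) :
    (Measure.pi fun _ : ι => bernoulliMeasure p).real
      {ω | K ≤ s * ∑ i, ((if ω i = true then c i else 0) - p * c i)} ≤
      Real.exp (p * (Real.exp s - 1 - s) * (∑ i, c i) - K) := by
  have := isProbabilityMeasure_bernoulliMeasure hp0 hp1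
  have h := ProbabilityTheory.measure_ge_le_exp_mul_mgf
    (μ := Measure.pi fun _ : ι => bernoulliMeasure p)
    (X := fun ω => s * ∑ i, ((if ω i = true then c i else 0) - p * c i)) K zero_le_one
    Integrable.of_finite
  refine h.trans ?_
  rw [ProbabilityTheory.mgf, sub_eq_neg_add, Real.exp_add, neg_one_mul]
  refine mul_le_mul_of_nonneg_left ?_ (Real.exp_nonneg _)
  simp only [one_mul, Finset.mul_sum, Real.exp_sum]
  rw [integral_fintype_prod_eq_prod
    (f := fun i (b : Bool) => Real.exp (s * ((if b = true then c i else 0) - p * c i)))]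
  refine Finset.prod_le_prod (fun i _ => integral_nonneg fun _ => Real.exp_nonneg _)
    fun i _ => ?_
  rw [integral_bernoulliMeasure hp0 hp1]
  simpa using centered_bernoulli_mgf_le hp0 (hc0 i) (hc1 i) s

theorem one_add_mul_log_one_add_sub_ge {δ : ℝ} (hδ0 : 0 ≤ δ) (hδ1 : δ ≤ 1) :
    0.38 * δ ^ 2 ≤ (1 + δ) * Real.log (1 + δ) - δ := by
  have hpos : 0 < 2 + δ := by linarith
  have hlog := Real.sum_range_le_log_div (x := δ / (2 + δ)) (by positivity)
    ((div_lt_one hpos).2 (by linarith)) 2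
  have harg : (1 + δ / (2 + δ)) / (1 - δ / (2 + δ)) = 1 + δ := by
    have : 1 - δ / (2 + δ) ≠ 0 := by
      rw [one_sub_div hpos.ne']
      simp [hpos.ne']
    field_simp
    ring
  rw [harg] at hlog
  simp only [Finset.sum_range_succ, Finset.sum_range_zero] at hlog
  norm_num at hlog
  have h1 : 2 * (δ / (2 + δ) + (δ / (2 + δ)) ^ 3 / 3) ≤ Real.log (1 + δ) := by linarith
  have h2 := mul_le_mul_of_nonneg_left h1 (by linarith : 0 ≤ 1 + δ)
  suffices 0.38 * δ ^ 2 + δ ≤ (1 + δ) * (2 * (δ / (2 + δ) + (δ / (2 + δ)) ^ 3 / 3)) by linarith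
  have h3 : (1 + δ) * (2 * (δ / (2 + δ) + (δ / (2 + δ)) ^ 3 / 3)) - (0.38 * δ ^ 2 + δ) =
      δ ^ 2 * ((2 + δ) ^ 2 + 2 / 3 * δ * (1 + δ) - 0.38 * (2 + δ) ^ 3) / (2 + δ) ^ 3 := by
    field_simp
    ring
  have h4 : 0 ≤ (2 + δ) ^ 2 + 2 / 3 * δ * (1 + δ) - 0.38 * (2 + δ) ^ 3 := by
    have h5 : δ ^ 2 ≤ δ := by nlinarith
    have h6 : δ ^ 3 ≤ δ ^ 2 := by nlinarith [sq_nonneg δ]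
    nlinarith
  have : 0 ≤ δ ^ 2 * ((2 + δ) ^ 2 + 2 / 3 * δ * (1 + δ) - 0.38 * (2 + δ) ^ 3) / (2 + δ) ^ 3 := by
    positivity
  linarith

theorem exp_neg_le_quadratic {δ : ℝ} (hδ0 : 0 ≤ δ) : Real.exp (-δ) ≤ 1 - δ + δ ^ 2 / 2 := by
  have h := Real.quadratic_le_exp_of_nonneg hδ0
  rw [Real.exp_neg, inv_le_iff_one_le_mul₀ (Real.exp_pos _)]
  have h2 : 0 ≤ 1 - δ + δ ^ 2 / 2 := by nlinarith [sq_nonneg (δ - 1)]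
  nlinarith [mul_le_mul_of_nonneg_left h h2, sq_nonneg (δ ^ 2)]

/-- A two-sided Chernoff bound for weighted sums of independent Bernoulli variables, in which the
deviation is measured relative to an upper bound `q` for the sum of the weights. -/
theorem measure_abs_centered_sum_ge_le {p δ q : ℝ} (hp0 : 0 ≤ p) (hp1 : p ≤ 1) (hδ0 : 0 ≤ δ)
    (hδ1 : δ ≤ 1) {c : ι → ℝ} (hc0 : ∀ i, 0 ≤ c i) (hc1 : ∀ i, c i ≤ 1) (hq : ∑ i, c i ≤ q) :
    (Measure.pi fun _ : ι => bernoulliMeasure p).real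
      {ω | δ * p * q ≤ |∑ i, ((if ω i = true then c i else 0) - p * c i)|} ≤
      2 * Real.exp (-(0.38 * δ ^ 2 * p * q)) := by
  have := isProbabilityMeasure_bernoulliMeasure hp0 hp1
  have hq0 : 0 ≤ q := (Finset.sum_nonneg fun i _ => hc0 i).trans hq
  have hpq : 0 ≤ p * q := mul_nonneg hp0 hq0
  have hmono : ∀ s, p * (Real.exp s - 1 - s) * (∑ i, c i) ≤ p * q * (Real.exp s - 1 - s) := by
    intro s
    have : 0 ≤ Real.exp s - 1 - s := by linarith [Real.add_one_le_exp s]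
    calc p * (Real.exp s - 1 - s) * (∑ i, c i) ≤ p * (Real.exp s - 1 - s) * q := by gcongr
      _ = _ := by ring
  have hup := measure_centered_sum_ge_le hp0 hp1 hc0 hc1 (Real.log (1 + δ))
    (Real.log (1 + δ) * (δ * p * q))
  have hlo := measure_centered_sum_ge_le hp0 hp1 hc0 hc1 (-δ) (δ * (δ * p * q))
  have hsub : {ω : ι → Bool | δ * p * q ≤ |∑ i, ((if ω i = true then c i else 0) - p * c i)|} ⊆
      {ω | Real.log (1 + δ) * (δ * p * q) ≤
        Real.log (1 + δ) * ∑ i, ((if ω i = true then c i else 0) - p * c i)} ∪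
      {ω | δ * (δ * p * q) ≤ -δ * ∑ i, ((if ω i = true then c i else 0) - p * c i)} := by
    intro ω hω
    rcases le_abs.1 (Set.mem_ofPred.1 hω) with h | h
    · exact Or.inl (mul_le_mul_of_nonneg_left h (Real.log_nonneg (by linarith)))
    · refine Or.inr ?_
      rw [Set.mem_ofPred, neg_mul_comm]
      exact mul_le_mul_of_nonneg_left h hδ0
  refine (measureReal_mono hsub).trans ((measureReal_union_le _ _).trans ?_)
  rw [two_mul]
  refine add_le_add (hup.trans (Real.exp_le_exp.2 ?_)) (hlo.trans (Real.exp_le_exp.2 ?_))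
  · have h1 := hmono (Real.log (1 + δ))
    rw [Real.exp_log (by linarith)] at h1 ⊢
    have h2 := mul_le_mul_of_nonneg_left (one_add_mul_log_one_add_sub_ge hδ0 hδ1) hpq
    linarith
  · have h1 := hmono (-δ)
    have h2 := mul_le_mul_of_nonneg_left (exp_neg_le_quadratic hδ0) hpq
    nlinarith [mul_nonneg hpq (sq_nonneg δ)]

end Chernoff

theorem cutW_nonneg {V : Type} {E : Finset (Sym2 V)} {w : Sym2 V → ℝ} (hw : ∀ e ∈ E, 0 ≤ w e)
    (A : Set V) : 0 ≤ cutW E w A :=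
  Finset.sum_nonneg fun e he => by
    split_ifs
    exacts [hw e he, le_rfl]

theorem cutW_eq_cutW_univ {V : Type} [Fintype V] (Q : Finset (Sym2 V)) (w : Sym2 V → ℝ)
    (A : Set V) : cutW Q w A = cutW Finset.univ (fun e => if e ∈ Q then w e else 0) A := by
  rw [cutW, cutW, ← Finset.sum_subset Q.subset_univ fun e _ he => by simp [he]]
  exact Finset.sum_congr rfl fun e he => by rw [if_pos he]

theorem exists_lightest_representatives {V : Type} [Fintype V] (H : Set (Sym2 V))
    (q : Set V → ℝ) :
    ∃ G : Finset (Set V), (∀ A ∈ G, Separates H A) ∧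
      (∀ A ∈ G, ∀ B ∈ G, (∀ e ∈ H, Crosses A e ↔ Crosses B e) → A = B) ∧
      ∀ A, Separates H A → ∃ B ∈ G, (∀ e ∈ H, Crosses B e ↔ Crosses A e) ∧ q B ≤ q A := by
  set τ : Set V → Set (Sym2 V) := fun A => {e ∈ H | Crosses A e} with hτ
  have hτ_iff : ∀ A B, τ A = τ B ↔ ∀ e ∈ H, Crosses A e ↔ Crosses B e := by
    intro A B
    simp only [hτ, Set.ext_iff, Set.mem_ofPred, and_congr_right_iff]
  have hmin : ∀ T ∈ Set.range τ, ∃ B, τ B = T ∧ ∀ A, τ A = T → q B ≤ q A := by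
    rintro _ ⟨A₀, rfl⟩
    exact Set.exists_min_image {A | τ A = τ A₀} q (Set.toFinite _) ⟨A₀, rfl⟩
  choose! g hgτ hgmin using hmin
  refine ⟨(Finset.univ.filter (Separates H)).image (g ∘ τ), ?_, ?_, fun A hA => ?_⟩
  · simp only [Finset.mem_image, Finset.mem_filter, Finset.mem_univ, true_and]
    rintro _ ⟨A, ⟨e, he, hc⟩, rfl⟩
    exact ⟨e, he, ((hτ_iff _ _).1 (hgτ _ ⟨A, rfl⟩) e he).2 hc⟩
  · simp only [Finset.mem_image]
    rintro _ ⟨A, -, rfl⟩ _ ⟨B, -, rfl⟩ h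
    have := (hτ_iff _ _).2 h
    simp only [Function.comp] at this ⊢
    rw [hgτ _ ⟨A, rfl⟩, hgτ _ ⟨B, rfl⟩] at this
    rw [this]
  · exact ⟨g (τ A), Finset.mem_image_of_mem _ (by simpa using hA),
      (hτ_iff _ _).1 (hgτ _ ⟨A, rfl⟩), hgmin _ ⟨A, rfl⟩ A rfl⟩

/-- A sum of negative powers of `n` over weighted objects, the number of objects of weight less
than `(k + 1) * c` being at most `n ^ (2 * k + 2)`. -/
theorem sum_inv_pow_floor_le {α : Type*} {G : Finset α} {q : α → ℝ} {c : ℝ} (hc : 0 < c)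
    {n ζ : ℕ} (hn : 2 ≤ n) (hζ : 4 ≤ ζ) (hq : ∀ A ∈ G, c ≤ q A)
    (hcount : ∀ k : ℕ, 1 ≤ k →
      (G.filter fun A => q A ≤ ((2 * k + 2 : ℕ) : ℝ) * c / 2).card ≤ n ^ (2 * k + 2)) :
    ∑ A ∈ G, ((n : ℝ) ^ (ζ * ⌊q A / c⌋₊))⁻¹ ≤ 2 / (n : ℝ) ^ (ζ - 4) := by
  obtain ⟨z, rfl⟩ := Nat.exists_eq_add_of_le hζ
  have hn0 : (0 : ℝ) < n := by positivity
  have hn2 : (2 : ℝ) ≤ n := by exact_mod_cast hn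
  have hfloor : ∀ A ∈ G, 1 ≤ ⌊q A / c⌋₊ := fun A hA =>
    Nat.le_floor (by rw [Nat.cast_one, one_le_div hc]; exact hq A hA)
  rw [add_tsub_cancel_left, ← Finset.sum_fiberwise_of_maps_to
    (t := G.image fun A => ⌊q A / c⌋₊ - 1) (g := fun A => ⌊q A / c⌋₊ - 1)
    fun A hA => Finset.mem_image_of_mem _ hA]
  have hfiber : ∀ j : ℕ,
      ∑ A ∈ G with ⌊q A / c⌋₊ - 1 = j, ((n : ℝ) ^ ((4 + z) * ⌊q A / c⌋₊))⁻¹ ≤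
        ((n : ℝ) ^ z)⁻¹ * (1 / 2) ^ j := by
    intro j
    have hcard : (G.filter fun A => ⌊q A / c⌋₊ - 1 = j).card ≤ n ^ (2 * (j + 1) + 2) := by
      refine (Finset.card_le_card fun A hA => ?_).trans (hcount (j + 1) (by omega))
      obtain ⟨hA, hj⟩ := Finset.mem_filter.1 hA
      refine Finset.mem_filter.2 ⟨hA, ?_⟩
      have hj' : ⌊q A / c⌋₊ = j + 1 := by have := hfloor A hA; omega
      have := Nat.lt_floor_add_one (q A / c)
      rw [hj', div_lt_iff₀ hc] at this
      push_cast at this ⊢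
      linarith
    calc ∑ A ∈ G with ⌊q A / c⌋₊ - 1 = j, ((n : ℝ) ^ ((4 + z) * ⌊q A / c⌋₊))⁻¹
        = ∑ A ∈ G with ⌊q A / c⌋₊ - 1 = j, ((n : ℝ) ^ ((4 + z) * (j + 1)))⁻¹ := by
          refine Finset.sum_congr rfl fun A hA => ?_
          obtain ⟨hA, hj⟩ := Finset.mem_filter.1 hA
          rw [show ⌊q A / c⌋₊ = j + 1 by have := hfloor A hA; omega]
      _ ≤ (n : ℝ) ^ (2 * (j + 1) + 2) * ((n : ℝ) ^ ((4 + z) * (j + 1)))⁻¹ := by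
          rw [Finset.sum_const, nsmul_eq_mul]
          refine mul_le_mul_of_nonneg_right ?_ (by positivity)
          exact_mod_cast hcard
      _ = ((n : ℝ) ^ z)⁻¹ * ((n : ℝ) ^ ((2 + z) * j))⁻¹ := by
          rw [show (4 + z) * (j + 1) = (2 * (j + 1) + 2) + z + (2 + z) * j by ring, pow_add,
            pow_add]
          field_simp
          ring
      _ ≤ ((n : ℝ) ^ z)⁻¹ * (1 / 2) ^ j := by
          refine mul_le_mul_of_nonneg_left ?_ (by positivity)
          rw [one_div, inv_pow]
          refine inv_anti₀ (by positivity) ?_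
          calc (2 : ℝ) ^ j ≤ (n : ℝ) ^ j := by gcongr
            _ ≤ (n : ℝ) ^ ((2 + z) * j) :=
              pow_le_pow_right₀ (by linarith) (Nat.le_mul_of_pos_left _ (by omega))
  calc _ ≤ ∑ j ∈ G.image fun A => ⌊q A / c⌋₊ - 1, ((n : ℝ) ^ z)⁻¹ * (1 / 2) ^ j :=
        Finset.sum_le_sum fun j _ => hfiber j
    _ ≤ ((n : ℝ) ^ z)⁻¹ * 2 := by
        rw [← Finset.mul_sum]
        refine mul_le_mul_of_nonneg_left ?_ (by positivity)
        exact (summable_geometric_two.sum_le_tsum _ fun _ _ => by positivity).trans_eq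
          tsum_geometric_two
    _ = 2 / (n : ℝ) ^ z := by rw [mul_comm, ← div_eq_mul_inv]

theorem sum_centered_eq {V : Type} (R : Finset (Sym2 V)) (w : Sym2 V → ℝ) {p : ℝ} (hp : p ≠ 0)
    (A : Set V) (ω : {e // e ∈ R} → Bool) :
    ∑ i : {e // e ∈ R}, ((if ω i = true then (if Crosses A i.1 then w i.1 else 0) else 0) -
        p * (if Crosses A i.1 then w i.1 else 0)) =
      -(p * (cutW R w A -
        ∑ e ∈ R.attach, (if Crosses A e.1 ∧ ω e = true then w e.1 / p else 0))) := by
  rw [cutW, ← Finset.sum_attach R, ← Finset.sum_sub_distrib, Finset.mul_sum,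
    ← Finset.sum_neg_distrib]
  refine Finset.sum_congr rfl fun e _ => ?_
  by_cases h1 : Crosses A e.1 <;> by_cases h2 : ω e = true <;> simp [h1, h2]
  field_simp
  ring

theorem measure_exists_cut_deviation_le {V : Type} [Fintype V]
    {R Q : Finset (Sym2 V)} {w : Sym2 V → ℝ} {π p δ : ℝ} {ζ : ℕ}
    (hn : 2 ≤ Fintype.card V) (hdiag : ∀ e ∈ Q, ¬ e.IsDiag) (hRQ : R ⊆ Q)
    (hw : ∀ e ∈ Q, 0 < w e ∧ w e ≤ 1)
    (hheavy : ∀ A : Set V, Separates (R : Set (Sym2 V)) A → π ≤ cutW Q w A)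
    (hp0 : 0 < p) (hp1 : p ≤ 1) (hζ : 5 ≤ ζ) (hδ0 : 0 < δ) (hδ1 : δ ≤ 1)
    (hcond : (ζ : ℝ) * Real.log (Fintype.card V) / 0.38 ≤ δ ^ 2 * p * π) :
    (Measure.pi fun _ : {e // e ∈ R} => bernoulliMeasure p).real
      {ω | ∃ A : Set V, δ * cutW Q w A < |cutW R w A -
        ∑ e ∈ R.attach, (if Crosses A e.1 ∧ ω e = true then w e.1 / p else 0)|} ≤
      4 / (Fintype.card V : ℝ) ^ (ζ - 4) := by
  have := isProbabilityMeasure_bernoulliMeasure hp0.le hp1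
  set n := Fintype.card V with hn_def
  set μ := Measure.pi fun _ : {e // e ∈ R} => bernoulliMeasure p
  have hprob : IsProbabilityMeasure μ :=
    inferInstanceAs (IsProbabilityMeasure (Measure.pi fun _ : {e // e ∈ R} => bernoulliMeasure p))
  have hn1 : (1 : ℝ) < n := by exact_mod_cast hn
  have hlog : 0 < Real.log n := Real.log_pos hn1
  have hπ : 0 < π := by
    have h1 : 0 < (ζ : ℝ) * Real.log n / 0.38 := by
      have : (0 : ℝ) < ζ := by exact_mod_cast (by omega : 0 < ζ)
      positivity
    exact pos_of_mul_pos_right (h1.trans_le hcond) (by positivity)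
  have hq0 : ∀ A, 0 ≤ cutW Q w A := cutW_nonneg fun e he => (hw e he).1.le
  obtain ⟨G, hGsep, hGinj, hGrep⟩ := exists_lightest_representatives (R : Set (Sym2 V)) (cutW Q w)
  set c : Set V → {e // e ∈ R} → ℝ := fun A i => if Crosses A i.1 then w i.1 else 0 with hc
  set bad : Set V → Set ({e // e ∈ R} → Bool) := fun A => {ω | δ * p * cutW Q w A ≤
    |∑ i, ((if ω i = true then c A i else 0) - p * c A i)|} with hbad
  have hsub : {ω : {e // e ∈ R} → Bool | ∃ A : Set V, δ * cutW Q w A < |cutW R w A -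
      ∑ e ∈ R.attach, (if Crosses A e.1 ∧ ω e = true then w e.1 / p else 0)|} ⊆
      ⋃ A ∈ G, bad A := by
    rintro ω ⟨A, hA⟩
    by_cases hsep : Separates (R : Set (Sym2 V)) A
    · obtain ⟨B, hBG, hBA, hqB⟩ := hGrep A hsep
      refine Set.mem_biUnion hBG ?_
      have hcBA : c B = c A := funext fun i => by simp only [hc, hBA i.1 i.2]
      simp only [hbad, Set.mem_ofPred, hcBA]
      rw [hc]
      simp only
      rw [sum_centered_eq R w hp0.ne' A ω, abs_neg, abs_mul, abs_of_pos hp0]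
      have h1 := mul_le_mul_of_nonneg_left hqB hδ0.le
      have h2 := mul_le_mul_of_nonneg_left (h1.trans hA.le) hp0.le
      linarith
    · exfalso
      have hnc : ∀ e ∈ R, ¬ Crosses A e := fun e he h => hsep ⟨e, he, h⟩
      have h1 : cutW R w A = 0 := Finset.sum_eq_zero fun e he => if_neg (hnc e he)
      have h2 : ∑ e ∈ R.attach, (if Crosses A e.1 ∧ ω e = true then w e.1 / p else 0) = 0 :=
        Finset.sum_eq_zero fun e _ => if_neg fun h => hnc e.1 e.2 h.1
      rw [h1, h2, sub_zero, abs_zero] at hA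
      exact absurd hA (not_lt.2 (mul_nonneg hδ0.le (hq0 A)))
  have hbound : ∀ A, μ.real (bad A) ≤ 2 * ((n : ℝ) ^ (ζ * ⌊cutW Q w A / π⌋₊))⁻¹ := by
    intro A
    have hsum : ∑ i, c A i ≤ cutW Q w A := by
      have : ∑ i, c A i = cutW R w A := by
        rw [cutW, ← Finset.sum_attach R]
        rfl
      rw [this]
      refine Finset.sum_le_sum_of_subset_of_nonneg hRQ fun e he _ => ?_
      split_ifs
      exacts [(hw e he).1.le, le_rfl]
    refine (measure_abs_centered_sum_ge_le hp0.le hp1 hδ0.le hδ1 (fun i => ?_) (fun i => ?_)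
      hsum).trans ?_
    · simp only [hc]
      split_ifs
      exacts [(hw _ (hRQ i.2)).1.le, le_rfl]
    · simp only [hc]
      split_ifs
      exacts [(hw _ (hRQ i.2)).2, zero_le_one]
    · refine mul_le_mul_of_nonneg_left ?_ zero_le_two
      rw [Real.exp_neg]
      refine inv_anti₀ (by positivity) ?_
      rw [← Real.exp_log (zero_lt_one.trans hn1), ← Real.exp_nat_mul, Real.exp_le_exp]
      have hfl : (⌊cutW Q w A / π⌋₊ : ℝ) * π ≤ cutW Q w A := by
        rw [← le_div_iff₀ hπ]
        exact Nat.floor_le (div_nonneg (hq0 A) hπ.le)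
      have h1 : (ζ : ℝ) * Real.log n ≤ 0.38 * (δ ^ 2 * p * π) := by
        rwa [div_le_iff₀' (by norm_num)] at hcond
      push_cast
      calc (ζ : ℝ) * ⌊cutW Q w A / π⌋₊ * Real.log n
          = ⌊cutW Q w A / π⌋₊ * (ζ * Real.log n) := by ring
        _ ≤ ⌊cutW Q w A / π⌋₊ * (0.38 * (δ ^ 2 * p * π)) := by gcongr
        _ = 0.38 * δ ^ 2 * p * (⌊cutW Q w A / π⌋₊ * π) := by ring
        _ ≤ 0.38 * δ ^ 2 * p * cutW Q w A := by gcongr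
  have hcount : ∀ k : ℕ, 1 ≤ k →
      (G.filter fun A => cutW Q w A ≤ ((2 * k + 2 : ℕ) : ℝ) * π / 2).card ≤ n ^ (2 * k + 2) := by
    intro k hk
    refine card_le_pow_of_heavyFor hπ (by omega) (H := (R : Set (Sym2 V)))
      (x := fun e => if e ∈ Q then w e else 0) hn (fun e => ?_) (fun v => ?_) (fun A hA => ?_)
      (fun A hA => ?_) (fun A hA B hB => hGinj A (Finset.mem_filter.1 hA).1 B
        (Finset.mem_filter.1 hB).1)
    · split_ifs with h
      exacts [(hw e h).1.le, le_rfl]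
    · exact if_neg fun h => hdiag _ h (Sym2.mk_isDiag_iff.2 rfl)
    · rw [← cutW_eq_cutW_univ]
      exact hheavy A hA
    · rw [← cutW_eq_cutW_univ]
      exact (Finset.mem_filter.1 hA).2
  calc μ.real _ ≤ μ.real (⋃ A ∈ G, bad A) := measureReal_mono hsub (measure_ne_top μ _)
    _ ≤ ∑ A ∈ G, μ.real (bad A) := measureReal_biUnion_finset_le _ _
    _ ≤ ∑ A ∈ G, 2 * ((n : ℝ) ^ (ζ * ⌊cutW Q w A / π⌋₊))⁻¹ :=
      Finset.sum_le_sum fun A _ => hbound A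
    _ ≤ 2 * (2 / (n : ℝ) ^ (ζ - 4)) := by
      rw [← Finset.mul_sum]
      exact mul_le_mul_of_nonneg_left (sum_inv_pow_floor_le hπ hn (by omega)
        (fun A hA => hheavy A (hGsep A hA)) hcount) zero_le_two
    _ = 4 / (n : ℝ) ^ (ζ - 4) := by ring

/-- **Cut preservation under independent edge sampling (Lemma 4.4).**
Let `R ⊆ Q` be edge sets on `n ≥ 2` vertices with weights in `(0,1]` such that every
edge of `R` is `π`-heavy in `(V,Q)`.  Sample each edge of `R` independently with
probability `p`, giving weight `w(e)/p` to sampled edges.  If `ζ ≥ 5` and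
`δ ∈ (0,1]` satisfy `δ²·p·π ≥ ζ·ln(n)/0.38`, then with probability at least
`1 − 4/n^{ζ−4}`, simultaneously for all cuts `C`: `|r^{(C)} − r̂^{(C)}| ≤ δ·q^{(C)}`. -/
theorem stmt_11 {V : Type} [Fintype V] [DecidableEq V]
    (R Q : Finset (Sym2 V)) (w : Sym2 V → ℝ) (π p δ : ℝ) (ζ : ℕ)
    (hn : 2 ≤ Fintype.card V)
    (hdiag : ∀ e ∈ Q, ¬ e.IsDiag)
    (hRQ : R ⊆ Q)
    (hw : ∀ e ∈ Q, 0 < w e ∧ w e ≤ 1)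
    (hheavy : ∀ e ∈ R, ∀ u v : V, e = s(u, v) →
      ∀ A : Set V, u ∈ A → v ∉ A → π ≤ cutW Q w A)
    (hp0 : 0 < p) (hp1 : p ≤ 1)
    (hζ : 5 ≤ ζ)
    (hδ0 : 0 < δ) (hδ1 : δ ≤ 1)
    (hcond : (ζ : ℝ) * Real.log (Fintype.card V) / 0.38 ≤ δ ^ 2 * p * π) :
    1 - 4 / (Fintype.card V : ℝ) ^ (ζ - 4) ≤
      ((Measure.pi fun _ : {e // e ∈ R} => bernoulliMeasure p)
        {ω : {e // e ∈ R} → Bool | ∀ A : Set V, A.Nonempty → Aᶜ.Nonempty →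
          |cutW R w A -
              ∑ e ∈ R.attach, (if Crosses A e.1 ∧ ω e = true then w e.1 / p else 0)|
            ≤ δ * cutW Q w A}).toReal := by
  have := isProbabilityMeasure_bernoulliMeasure hp0.le hp1
  have hbad := measure_exists_cut_deviation_le hn hdiag hRQ hw
    (fun A ⟨e, he, u, v, huv, hu, hv⟩ => hheavy e he u v huv A hu hv)
    hp0 hp1 hζ hδ0 hδ1 hcond
  rw [← measureReal_def]
  refine le_trans ?_ (measureReal_mono (s₁ := {ω : {e // e ∈ R} → Bool | ∃ A : Set V,
    δ * cutW Q w A < |cutW R w A -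
      ∑ e ∈ R.attach, (if Crosses A e.1 ∧ ω e = true then w e.1 / p else 0)|}ᶜ) ?_)
  · rw [probReal_compl_eq_one_sub (Set.toFinite _).measurableSet]
    linarith
  · intro ω hω A _ _
    exact not_lt.1 fun h => hω ⟨A, h⟩
end
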